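/- arXiv:1806.00403 — 5 statements merged into one kernel-verified Lean document; each statement's English description precedes it below -/
import Mathlib

section
/- Fix an integer k ≥ 2, a real t ∈ [0,1), and n ≥ 0, and define g_n(φ) = B̃_{φ,t,k}^n(φ). Then g_n : ℝ → ℝ is continuous and strictly increasing, and for all real φ_1 < φ_2 the number of solutions φ ∈ (φ_1, φ_2] of g_n(φ) ∈ π + 2πℤ differs from (g_n(φ_2) − g_n(φ_1))/(2π) by at most 1. -/
/-- The lift of the Blaschke product `B_{e^{iφ},t,k}` to `ℝ`:
`B̃_{φ,t,k}(θ) = k·θ − 2k·arctan(t·sin θ/(1 + t·cos θ)) + φ`. -/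
noncomputable def Blift (φ t : ℝ) (k : ℕ) (θ : ℝ) : ℝ :=
  (k : ℝ) * θ - 2 * (k : ℝ) * Real.arctan (t * Real.sin θ / (1 + t * Real.cos θ)) + φ

theorem Blift_aux_pos (t θ : ℝ) (ht0 : 0 ≤ t) (ht1 : t < 1) : 0 < 1 + t * Real.cos θ := by
  nlinarith [Real.neg_one_le_cos θ, mul_nonneg ht0 (by linarith [Real.neg_one_le_cos θ] : 0 ≤ Real.cos θ + 1)]

theorem Blift_aux_hasDeriv (t θ : ℝ) (ht0 : 0 ≤ t) (ht1 : t < 1) :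
    HasDerivAt (fun θ : ℝ => θ - 2 * Real.arctan (t * Real.sin θ / (1 + t * Real.cos θ)))
      ((1 - t ^ 2) / ((1 + t * Real.cos θ) ^ 2 + (t * Real.sin θ) ^ 2)) θ := by
  have hp := Blift_aux_pos t θ ht0 ht1
  have h1 := ((Real.hasDerivAt_sin θ).const_mul t).fun_div
    (((Real.hasDerivAt_cos θ).const_mul t).const_add 1) hp.ne'
  have h2 := (hasDerivAt_id' θ).fun_sub (h1.arctan.const_mul 2)
  refine h2.congr_deriv ?_
  have hs := Real.sin_sq_add_cos_sq θ
  have hq : 0 < (1 + t * Real.cos θ) ^ 2 + (t * Real.sin θ) ^ 2 := by positivity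
  have e : 1 + (t * Real.sin θ / (1 + t * Real.cos θ)) ^ 2 =
      ((1 + t * Real.cos θ) ^ 2 + (t * Real.sin θ) ^ 2) / (1 + t * Real.cos θ) ^ 2 := by
    field_simp
  rw [e]
  generalize Real.cos θ = c at *
  generalize Real.sin θ = s at *
  have hs' : s ^ 2 = 1 - c ^ 2 := by linarith
  field_simp
  ring_nf
  rw [hs']
  ring

theorem Blift_aux_strictMono (t : ℝ) (ht0 : 0 ≤ t) (ht1 : t < 1) :
    StrictMono (fun θ : ℝ => θ - 2 * Real.arctan (t * Real.sin θ / (1 + t * Real.cos θ))) := by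
  apply strictMono_of_deriv_pos
  intro θ
  rw [(Blift_aux_hasDeriv t θ ht0 ht1).deriv]
  have hp := Blift_aux_pos t θ ht0 ht1
  have : 0 < 1 - t ^ 2 := by nlinarith
  positivity

theorem Blift_aux_cont (t : ℝ) (ht0 : 0 ≤ t) (ht1 : t < 1) :
    Continuous (fun θ : ℝ => θ - 2 * Real.arctan (t * Real.sin θ / (1 + t * Real.cos θ))) :=
  continuous_iff_continuousAt.2 fun θ => (Blift_aux_hasDeriv t θ ht0 ht1).continuousAt

theorem Blift_aux_count (g : ℝ → ℝ) (hc : Continuous g) (hm : StrictMono g) (a b : ℝ)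
    (hab : a < b) :
    ({φ ∈ Set.Ioc a b | ∃ m : ℤ, g φ = Real.pi + 2 * Real.pi * m}).Finite ∧
      |(({φ ∈ Set.Ioc a b | ∃ m : ℤ, g φ = Real.pi + 2 * Real.pi * m}).ncard : ℝ) -
          (g b - g a) / (2 * Real.pi)| ≤ 1 := by
  have hpi := Real.pi_pos
  set S := {φ ∈ Set.Ioc a b | ∃ m : ℤ, g φ = Real.pi + 2 * Real.pi * m} with hS
  set x := (g a - Real.pi) / (2 * Real.pi) with hx
  set y := (g b - Real.pi) / (2 * Real.pi) with hy
  have hga : g a = Real.pi + 2 * Real.pi * x := by rw [hx]; field_simp; ring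
  have hgb : g b = Real.pi + 2 * Real.pi * y := by rw [hy]; field_simp; ring
  have hxy : x ≤ y := by
    rw [hx, hy]
    have := hm hab
    gcongr
  have himg : g '' S = (fun m : ℤ => Real.pi + 2 * Real.pi * (m : ℝ)) ''
      (Finset.Ioc ⌊x⌋ ⌊y⌋ : Set ℤ) := by
    ext z
    constructor
    · rintro ⟨φ, ⟨⟨h1, h2⟩, m, h⟩, rfl⟩
      refine ⟨m, ?_, h.symm⟩
      have h1' := hm h1
      have h2' := hm.monotone h2
      rw [h, hga] at h1'
      rw [h, hgb] at h2'
      simp only [Finset.coe_Ioc, Set.mem_Ioc]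
      rw [Int.floor_lt, Int.le_floor]
      constructor <;> nlinarith
    · rintro ⟨m, hm', rfl⟩
      simp only [Finset.coe_Ioc, Set.mem_Ioc] at hm'
      rw [Int.floor_lt, Int.le_floor] at hm'
      have : Real.pi + 2 * Real.pi * (m : ℝ) ∈ Set.Ioc (g a) (g b) := by
        rw [hga, hgb]
        constructor <;> nlinarith [hm'.1, hm'.2]
      obtain ⟨φ, hφ, e⟩ := intermediate_value_Ioc hab.le hc.continuousOn this
      exact ⟨φ, ⟨hφ, m, e⟩, e⟩
  have hinj : Function.Injective (fun m : ℤ => Real.pi + 2 * Real.pi * (m : ℝ)) := by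
    intro p q h
    have h' : 2 * Real.pi * (p : ℝ) = 2 * Real.pi * (q : ℝ) := by simpa using h
    exact_mod_cast mul_left_cancel₀ (by positivity) h'
  have hcard : S.ncard = (⌊y⌋ - ⌊x⌋).toNat := by
    rw [← Set.ncard_image_of_injective S hm.injective, himg,
      Set.ncard_image_of_injective _ hinj, Set.ncard_coe_finset, Int.card_Ioc]
  refine ⟨?_, ?_⟩
  · apply Set.Finite.of_finite_image _ hm.injective.injOn
    rw [himg]
    exact (Finset.finite_toSet _).image _
  · have h0 : (0 : ℤ) ≤ ⌊y⌋ - ⌊x⌋ := by linarith [Int.floor_mono hxy]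
    have h1 : (S.ncard : ℝ) = ⌊y⌋ - ⌊x⌋ := by
      rw [hcard]
      have : (((⌊y⌋ - ⌊x⌋).toNat : ℤ) : ℝ) = ((⌊y⌋ - ⌊x⌋ : ℤ) : ℝ) := by
        rw [Int.toNat_of_nonneg h0]
      push_cast at this ⊢
      simpa using this
    have h2 : (g b - g a) / (2 * Real.pi) = y - x := by
      rw [hx, hy]; ring
    rw [h1, h2, abs_le]
    constructor <;> linarith [Int.floor_le x, Int.lt_floor_add_one x, Int.floor_le y,
      Int.lt_floor_add_one y]

theorem Blift_aux_main (k : ℕ) (t : ℝ) (ht0 : 0 ≤ t) (ht1 : t < 1) (n : ℕ) :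
    Continuous (fun φ : ℝ => (Blift φ t k)^[n] φ) ∧
    StrictMono (fun φ : ℝ => (Blift φ t k)^[n] φ) := by
  induction n with
  | zero => exact ⟨continuous_id, strictMono_id⟩
  | succ n ih =>
    have e : (fun φ : ℝ => (Blift φ t k)^[n + 1] φ) = fun φ => (k : ℝ) *
        (fun θ : ℝ => θ - 2 * Real.arctan (t * Real.sin θ / (1 + t * Real.cos θ)))
          ((Blift φ t k)^[n] φ) + φ := by
      funext φ
      rw [Function.iterate_succ_apply']
      simp only [Blift]
      ring
    rw [e]
    constructor
    · exact (((Blift_aux_cont t ht0 ht1).comp ih.1).const_mul _).add continuous_id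
    · intro p q hpq
      have := (Blift_aux_strictMono t ht0 ht1) (ih.2 hpq)
      exact add_lt_add_of_le_of_lt (mul_le_mul_of_nonneg_left this.le k.cast_nonneg) hpq

theorem stmt8 (k : ℕ) (hk : 2 ≤ k) (t : ℝ) (ht0 : 0 ≤ t) (ht1 : t < 1) (n : ℕ) :
    Continuous (fun φ : ℝ => (Blift φ t k)^[n] φ) ∧
    StrictMono (fun φ : ℝ => (Blift φ t k)^[n] φ) ∧
    ∀ φ1 φ2 : ℝ, φ1 < φ2 →
      ({φ ∈ Set.Ioc φ1 φ2 | ∃ m : ℤ,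
          (Blift φ t k)^[n] φ = Real.pi + 2 * Real.pi * m}).Finite ∧
      |(({φ ∈ Set.Ioc φ1 φ2 | ∃ m : ℤ,
            (Blift φ t k)^[n] φ = Real.pi + 2 * Real.pi * m}).ncard : ℝ) -
          ((Blift φ2 t k)^[n] φ2 - (Blift φ1 t k)^[n] φ1) / (2 * Real.pi)| ≤ 1 := by
  obtain ⟨h1, h2⟩ := Blift_aux_main k t ht0 ht1 n
  exact ⟨h1, h2, fun a b hab => Blift_aux_count _ h1 h2 a b hab⟩
end

section
/- Fix an integer k ≥ 2 and a real t ∈ [0,1). Let 0 < φ_1 < φ_2 ≤ π, and suppose (e^{iφ_1}, t) lies below the φ_e curve. Then there exists N ≥ 0 such that for all n ≥ N, B̃_{φ_2,t,k}^n(φ_2) − B̃_{φ_1,t,k}^n(φ_1) ≥ 2π·k^{n−N}; in particular lim inf_{n→∞} k^{−n}·(B̃_{φ_2,t,k}^n(φ_2) − B̃_{φ_1,t,k}^n(φ_1)) > 0. -/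
/-- The Blaschke product `B_{z,t,k}(w) = z·((w + t)/(1 + w·t))^k`. -/
noncomputable def Blaschke (z : ℂ) (t : ℝ) (k : ℕ) (w : ℂ) : ℂ :=
  z * ((w + (t : ℂ)) / (1 + w * (t : ℂ))) ^ k

/-- The root with nonnegative imaginary part of the quadratic
`t·w² + ((k+1)·t² − (k−1))·w + t = 0` (for `t_c ≤ t < 1` the discriminant
`(k+1)²t⁴ − 2(k²+1)t² + (k−1)²` is `≤ 0`, so the root is
`(−b + i·√(−disc))/(2t)` with `b = (k+1)t² − (k−1)`). -/
noncomputable def wbullet (k : ℕ) (t : ℝ) : ℂ :=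
  (-((((k : ℂ)) + 1) * (t : ℂ)^2 - ((k : ℂ) - 1)) +
    Complex.I * ((Real.sqrt (-(((k : ℝ) + 1)^2 * t^4 - 2 * ((k : ℝ)^2 + 1) * t^2 +
      ((k : ℝ) - 1)^2)) : ℝ) : ℂ)) / (2 * (t : ℂ))

/-- The edge angle `φ_e(t) = Arg(w_•(t)·((1 + w_•(t)·t)/(w_•(t) + t))^k)`. -/
noncomputable def phie (k : ℕ) (t : ℝ) : ℝ :=
  (wbullet k t * ((1 + wbullet k t * (t : ℂ)) / (wbullet k t + (t : ℂ))) ^ k).arg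

/-- `(z,t)` lies below the `φ_e` curve: either `0 ≤ t < t_c`, or
`t_c ≤ t < 1` and `φ_e(t) < |Arg z| ≤ π`. -/
def belowCurve (k : ℕ) (t : ℝ) (z : ℂ) : Prop :=
  (0 ≤ t ∧ t < ((k : ℝ) - 1) / ((k : ℝ) + 1)) ∨
  (((k : ℝ) - 1) / ((k : ℝ) + 1) ≤ t ∧ t < 1 ∧ phie k t < |z.arg| ∧ |z.arg| ≤ Real.pi)

lemma den_pos {t : ℝ} (ht0 : 0 ≤ t) (ht1 : t < 1) (θ : ℝ) : 0 < 1 + t * Real.cos θ := by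
  nlinarith [Real.neg_one_le_cos θ]

lemma den2_pos {t : ℝ} (ht0 : 0 ≤ t) (ht1 : t < 1) (θ : ℝ) :
    0 < 1 + 2 * t * Real.cos θ + t ^ 2 := by
  nlinarith [Real.neg_one_le_cos θ, mul_nonneg ht0 (by linarith [Real.neg_one_le_cos θ] : 0 ≤ 1 + Real.cos θ), sq_nonneg (1 - t), mul_pos (sub_pos.2 ht1) (sub_pos.2 ht1)]

lemma Blift_hasDeriv (φ : ℝ) {t : ℝ} (ht0 : 0 ≤ t) (ht1 : t < 1) (k : ℕ) (θ : ℝ) :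
    HasDerivAt (Blift φ t k) (k * (1 - t ^ 2) / (1 + 2 * t * Real.cos θ + t ^ 2)) θ := by
  have h1 := den_pos ht0 ht1 θ
  have h2 := den2_pos ht0 ht1 θ
  have hs : HasDerivAt (fun θ => t * Real.sin θ) (t * Real.cos θ) θ :=
    (Real.hasDerivAt_sin θ).const_mul t
  have hc : HasDerivAt (fun θ => 1 + t * Real.cos θ) (t * (-Real.sin θ)) θ :=
    ((Real.hasDerivAt_cos θ).const_mul t).const_add 1
  have hq := (hs.div hc h1.ne').arctan
  have := ((((hasDerivAt_id θ).const_mul (k : ℝ)).sub (hq.const_mul (2 * (k : ℝ)))).add_const φ)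
  refine this.congr_deriv ?_
  simp only [Pi.div_apply]
  have e : 1 + (t * Real.sin θ / (1 + t * Real.cos θ)) ^ 2
      = (1 + 2 * t * Real.cos θ + t ^ 2) / (1 + t * Real.cos θ) ^ 2 := by
    field_simp
    nlinarith [Real.sin_sq_add_cos_sq θ]
  rw [e]
  field_simp
  have e2 : t ^ 2 * Real.sin θ ^ 2 = t ^ 2 - t ^ 2 * Real.cos θ ^ 2 := by
    rw [Real.sin_sq]; ring
  linear_combination (-2) * Real.sin_sq_add_cos_sq θ * t ^ 2 * k

lemma Blift_strictMono (φ : ℝ) {t : ℝ} (ht0 : 0 ≤ t) (ht1 : t < 1) {k : ℕ} (hk : 2 ≤ k) :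
    StrictMono (Blift φ t k) := by
  apply strictMono_of_deriv_pos
  intro x
  rw [(Blift_hasDeriv φ ht0 ht1 k x).deriv]
  have h2 := den2_pos ht0 ht1 x
  have : (0 : ℝ) < k := by positivity
  have : 0 < 1 - t ^ 2 := by nlinarith
  positivity

lemma Blift_add (φ t : ℝ) (k m : ℕ) (θ : ℝ) :
    Blift φ t k (θ + 2 * Real.pi * m) = Blift φ t k θ + 2 * Real.pi * (m * k) := by
  unfold Blift
  have : θ + 2 * Real.pi * m = θ + m * (2 * Real.pi) := by ring
  rw [this, Real.sin_add_nat_mul_two_pi, Real.cos_add_nat_mul_two_pi]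
  ring

lemma Blift_bound (φ t : ℝ) (k : ℕ) (θ : ℝ) :
    |Blift φ t k θ| ≤ k * |θ| + (k * Real.pi + |φ|) := by
  unfold Blift
  set A := Real.arctan (t * Real.sin θ / (1 + t * Real.cos θ))
  have h : |A| ≤ Real.pi / 2 := abs_le.2 ⟨(Real.neg_pi_div_two_lt_arctan _).le, (Real.arctan_lt_pi_div_two _).le⟩
  calc |(k : ℝ) * θ - 2 * k * A + φ| ≤ |(k : ℝ) * θ| + |2 * k * A| + |φ| :=
        (abs_add_le _ _).trans (by gcongr; exact abs_sub _ _)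
    _ = k * |θ| + 2 * k * |A| + |φ| := by simp [abs_mul]
    _ ≤ k * |θ| + 2 * k * (Real.pi / 2) + |φ| := by gcongr
    _ = _ := by ring

lemma iter_bound (φ t : ℝ) {k : ℕ} (hk : 2 ≤ k) (x : ℝ) (n : ℕ) :
    |(Blift φ t k)^[n] x| + (k * Real.pi + |φ|) ≤ (k : ℝ) ^ n * (|x| + (k * Real.pi + |φ|)) := by
  induction n with
  | zero => simp
  | succ n ih =>
    rw [Function.iterate_succ_apply']
    have h := Blift_bound φ t k ((Blift φ t k)^[n] x)
    have hk' : (2 : ℝ) ≤ k := by exact_mod_cast hk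
    have hM : 0 ≤ k * Real.pi + |φ| := by positivity
    have := mul_le_mul_of_nonneg_left ih (by positivity : (0 : ℝ) ≤ k)
    rw [pow_succ]
    nlinarith

lemma dynamics {t : ℝ} (ht0 : 0 ≤ t) (ht1 : t < 1) {k : ℕ} (hk : 2 ≤ k)
    (φ1 φ2 : ℝ) (h12 : φ1 < φ2) (ρ : ℝ → ℝ) (hρ : Continuous ρ) (hpos : ∀ x, 0 < ρ x)
    (C : ℝ) (hC : ∀ x, ρ x ≤ C) (l : ℝ) (hl : 1 < l)
    (hexp : ∀ x, l * ρ x ≤ ρ (Blift φ1 t k x) *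
      (k * (1 - t ^ 2) / (1 + 2 * t * Real.cos x + t ^ 2))) :
    ∃ N : ℕ, 2 * Real.pi ≤ (Blift φ2 t k)^[N] φ2 - (Blift φ1 t k)^[N] φ1 := by
  set L : ℝ → ℝ := fun x => ∫ y in (0:ℝ)..x, ρ y with hL
  have hLd : ∀ x, HasDerivAt L (ρ x) x := fun x =>
    intervalIntegral.integral_hasDerivAt_right (hρ.intervalIntegrable _ _)
      hρ.stronglyMeasurable.stronglyMeasurableAtFilter hρ.continuousAt
  have hLm : StrictMono L := strictMono_of_deriv_pos (fun x => by rw [(hLd x).deriv]; exact hpos x)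
  have hCm : Monotone (fun x => C * x - L x) := by
    have hd : ∀ x, HasDerivAt (fun x => C * x - L x) (C * 1 - ρ x) x := fun x =>
      ((hasDerivAt_id x).const_mul C).sub (hLd x)
    apply monotone_of_deriv_nonneg (fun x => (hd x).differentiableAt)
    intro x; rw [(hd x).deriv]; linarith [hC x]
  have hEm : Monotone (fun x => L (Blift φ1 t k x) - l * L x) := by
    have hd : ∀ x, HasDerivAt (fun x => L (Blift φ1 t k x) - l * L x)
        (ρ (Blift φ1 t k x) * (k * (1 - t ^ 2) / (1 + 2 * t * Real.cos x + t ^ 2)) - l * ρ x) x :=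
      fun x => ((hLd _).comp x (Blift_hasDeriv φ1 ht0 ht1 k x)).sub ((hLd x).const_mul l)
    apply monotone_of_deriv_nonneg (fun x => (hd x).differentiableAt)
    intro x; rw [(hd x).deriv]; linarith [hexp x]
  have hC0 : 0 < C := (hpos 0).trans_le (hC 0)
  have key : ∀ n, (Blift φ1 t k)^[n] φ1 < (Blift φ2 t k)^[n] φ2 ∧
      l ^ n * (L φ2 - L φ1) ≤ L ((Blift φ2 t k)^[n] φ2) - L ((Blift φ1 t k)^[n] φ1) := by
    intro n
    induction n with
    | zero => simpa using h12
    | succ n ih =>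
      rw [Function.iterate_succ_apply', Function.iterate_succ_apply']
      obtain ⟨i1, i2⟩ := ih
      set a := (Blift φ1 t k)^[n] φ1
      set b := (Blift φ2 t k)^[n] φ2
      have e : Blift φ2 t k b = Blift φ1 t k b + (φ2 - φ1) := by unfold Blift; ring
      have hm := Blift_strictMono φ1 ht0 ht1 hk i1
      have hE := hEm i1.le
      have hLL := hLm (show Blift φ1 t k b < Blift φ2 t k b by linarith)
      refine ⟨by linarith, ?_⟩
      simp only at hE
      have := mul_le_mul_of_nonneg_left i2 (by linarith : 0 ≤ l)
      rw [pow_succ]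
      nlinarith
  have hpos0 : 0 < L φ2 - L φ1 := by linarith [hLm h12]
  obtain ⟨N, hN⟩ := pow_unbounded_of_one_lt (C * (2 * Real.pi) / (L φ2 - L φ1)) hl
  refine ⟨N, ?_⟩
  obtain ⟨k1, k2⟩ := key N
  have h3 := hCm k1.le
  simp only at h3
  rw [div_lt_iff₀ hpos0] at hN
  have : C * (2 * Real.pi) ≤ C * ((Blift φ2 t k)^[N] φ2 - (Blift φ1 t k)^[N] φ1) := by linarith
  exact le_of_mul_le_mul_left this hC0

lemma finish {t : ℝ} (ht0 : 0 ≤ t) (ht1 : t < 1) {k : ℕ} (hk : 2 ≤ k)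
    (φ1 φ2 : ℝ) (h12 : φ1 < φ2)
    (h : ∃ N : ℕ, 2 * Real.pi ≤ (Blift φ2 t k)^[N] φ2 - (Blift φ1 t k)^[N] φ1) :
    (∃ N : ℕ, ∀ n : ℕ, N ≤ n →
      2 * Real.pi * (k : ℝ) ^ (n - N) ≤ (Blift φ2 t k)^[n] φ2 - (Blift φ1 t k)^[n] φ1) ∧
    0 < Filter.liminf
        (fun n : ℕ => ((k : ℝ) ^ n)⁻¹ * ((Blift φ2 t k)^[n] φ2 - (Blift φ1 t k)^[n] φ1))
        Filter.atTop := by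
  obtain ⟨N, hN⟩ := h
  have hkp : (0 : ℝ) < k := by positivity
  have main : ∀ m : ℕ, 2 * Real.pi * (k : ℝ) ^ m ≤
      (Blift φ2 t k)^[N + m] φ2 - (Blift φ1 t k)^[N + m] φ1 := by
    intro m
    induction m with
    | zero => simpa using hN
    | succ m ih =>
      rw [← add_assoc, Function.iterate_succ_apply', Function.iterate_succ_apply']
      set a := (Blift φ1 t k)^[N + m] φ1
      set b := (Blift φ2 t k)^[N + m] φ2
      have e : Blift φ2 t k b = Blift φ1 t k b + (φ2 - φ1) := by unfold Blift; ring
      have h1 : a + 2 * Real.pi * ((k ^ m : ℕ) : ℝ) ≤ b := by push_cast; linarith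
      have h2 := (Blift_strictMono φ1 ht0 ht1 hk).monotone h1
      rw [Blift_add] at h2
      push_cast at h2
      rw [pow_succ]
      linarith
  have part1 : ∀ n : ℕ, N ≤ n →
      2 * Real.pi * (k : ℝ) ^ (n - N) ≤ (Blift φ2 t k)^[n] φ2 - (Blift φ1 t k)^[n] φ1 := by
    intro n hn
    have := main (n - N)
    rwa [Nat.add_sub_cancel' hn] at this
  refine ⟨⟨N, part1⟩, ?_⟩
  have hc : 0 < 2 * Real.pi * ((k : ℝ) ^ N)⁻¹ := by positivity
  refine hc.trans_le (Filter.le_liminf_of_le ?_ ?_)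
  · apply Filter.IsBoundedUnder.isCoboundedUnder_ge
    refine ⟨(|φ2| + (k * Real.pi + |φ2|)) + (|φ1| + (k * Real.pi + |φ1|)), ?_⟩
    rw [Filter.eventually_map]
    refine Filter.Eventually.of_forall (fun n => ?_)
    beta_reduce
    rw [inv_mul_le_iff₀ (by positivity)]
    have b1 := iter_bound φ1 t hk φ1 n
    have b2 := iter_bound φ2 t hk φ2 n
    have := le_abs_self ((Blift φ2 t k)^[n] φ2)
    have := neg_abs_le ((Blift φ1 t k)^[n] φ1)
    have : 0 ≤ k * Real.pi + |φ1| := by positivity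
    have : 0 ≤ k * Real.pi + |φ2| := by positivity
    rw [mul_add]
    linarith
  · filter_upwards [Filter.eventually_ge_atTop N] with n hn
    rw [le_inv_mul_iff₀ (by positivity)]
    refine le_trans (le_of_eq ?_) (part1 n hn)
    obtain ⟨m, rfl⟩ := Nat.exists_eq_add_of_le hn
    rw [Nat.add_sub_cancel_left, pow_add]
    field_simp

lemma exp_arctan (u : ℝ) :
    Complex.exp ((Real.arctan u : ℂ) * Complex.I) ^ 2 * (1 - u * Complex.I) = 1 + u * Complex.I := by
  have h := Real.cos_arctan u
  have h' := Real.sin_arctan u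
  have hs : (Real.sqrt (1 + u ^ 2)) ^ 2 = 1 + u ^ 2 := Real.sq_sqrt (by positivity)
  have hp : 0 < Real.sqrt (1 + u ^ 2) := by positivity
  rw [Complex.exp_mul_I, ← Complex.ofReal_cos, ← Complex.ofReal_sin, h, h']
  have hs' : ((Real.sqrt (1 + u ^ 2) : ℝ) : ℂ) ^ 2 = 1 + (u : ℂ) ^ 2 := by
    exact_mod_cast congrArg (fun x : ℝ => (x : ℂ)) hs
  have hp' : ((Real.sqrt (1 + u ^ 2) : ℝ) : ℂ) ≠ 0 := by exact_mod_cast hp.ne'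
  push_cast
  field_simp
  rw [hs']
  linear_combination (-(u : ℂ) ^ 2 - u ^ 3 * Complex.I) * Complex.I_sq

lemma one_add_ne {t : ℝ} (ht0 : 0 ≤ t) (ht1 : t < 1) {w : ℂ} (hw : ‖w‖ ≤ 1) :
    1 + w * (t : ℂ) ≠ 0 := by
  intro h
  have : w * t = -1 := by linear_combination h
  have h2 := congrArg norm this
  rw [norm_mul, norm_neg, norm_one, Complex.norm_real, Real.norm_of_nonneg ht0] at h2
  nlinarith [norm_nonneg w]

lemma Blift_exp (φ : ℝ) {t : ℝ} (ht0 : 0 ≤ t) (ht1 : t < 1) (k : ℕ) (θ : ℝ) :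
    Complex.exp ((Blift φ t k θ : ℂ) * Complex.I) =
      Blaschke (Complex.exp ((φ : ℂ) * Complex.I)) t k (Complex.exp ((θ : ℂ) * Complex.I)) := by
  have h1 := den_pos ht0 ht1 θ
  unfold Blift Blaschke
  set u := t * Real.sin θ / (1 + t * Real.cos θ) with hu
  have hA := exp_arctan u
  set A := Real.arctan u
  set E := Complex.exp ((A : ℂ) * Complex.I) with hE
  have hE0 : E ≠ 0 := Complex.exp_ne_zero _
  set w := Complex.exp ((θ : ℂ) * Complex.I) with hw
  have hwn : ‖w‖ = 1 := Complex.norm_exp_ofReal_mul_I θ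
  have hd := one_add_ne ht0 ht1 hwn.le
  have e : Complex.exp (((((k : ℝ) * θ - 2 * (k : ℝ) * A + φ : ℝ)) : ℂ) * Complex.I)
      = Complex.exp ((φ : ℂ) * Complex.I) * (w / E ^ 2) ^ k := by
    rw [hw, hE, ← Complex.exp_nat_mul, ← Complex.exp_sub, ← Complex.exp_nat_mul, ← Complex.exp_add]
    congr 1
    push_cast
    ring
  rw [e]
  congr 2
  rw [div_eq_div_iff (pow_ne_zero _ hE0) hd]
  -- w (1 + w t) = (w + t) E^2
  have hwc : w = Real.cos θ + Real.sin θ * Complex.I := by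
    rw [hw, Complex.exp_mul_I, Complex.ofReal_cos, Complex.ofReal_sin]
  have hcs : (Real.cos θ : ℂ) ^ 2 + (Real.sin θ : ℂ) ^ 2 = 1 := by
    exact_mod_cast congrArg (fun x : ℝ => (x : ℂ)) (Real.cos_sq_add_sin_sq θ)
  have hu1 : (u : ℂ) * (1 + t * Real.cos θ) = t * Real.sin θ := by
    have : u * (1 + t * Real.cos θ) = t * Real.sin θ := by rw [hu]; field_simp
    exact_mod_cast congrArg (fun x : ℝ => (x : ℂ)) this
  have hB : E ^ 2 * (1 + t * (Real.cos θ - Real.sin θ * Complex.I)) =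
      1 + t * (Real.cos θ + Real.sin θ * Complex.I) := by
    linear_combination (1 + t * Real.cos θ : ℂ) * hA + (E ^ 2 * Complex.I + Complex.I) * hu1
  have hwb : w * (Real.cos θ - Real.sin θ * Complex.I) = 1 := by
    rw [hwc]; linear_combination hcs - (Real.sin θ : ℂ) ^ 2 * Complex.I_sq
  rw [← hwc] at hB
  linear_combination (-w) * hB + E ^ 2 * t * hwb

lemma normSq_one_add (t θ : ℝ) :
    ‖1 + Complex.exp ((θ : ℂ) * Complex.I) * (t : ℂ)‖ ^ 2 = 1 + 2 * t * Real.cos θ + t ^ 2 := by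
  rw [Complex.sq_norm, Complex.normSq_apply]
  simp only [Complex.add_re, Complex.one_re, Complex.mul_re, Complex.ofReal_re, Complex.ofReal_im,
    Complex.add_im, Complex.one_im, Complex.mul_im, Complex.exp_ofReal_mul_I_re, Complex.exp_ofReal_mul_I_im]
  linear_combination t ^ 2 * Real.sin_sq_add_cos_sq θ

lemma K1 {t : ℝ} {k : ℕ} {z p : ℂ} (hz : ‖z‖ = 1) (hp : ‖p‖ < 1)
    (he : z * p ^ k * (1 - t * p) = p - t) :
    1 - t ^ 2 = ‖1 - t * p‖ ^ 2 * ∑ i ∈ Finset.range k, (‖p‖ ^ 2) ^ i := by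
  have h1 : (‖p‖ ^ 2) ^ k * ‖1 - t * p‖ ^ 2 = ‖p - t‖ ^ 2 := by
    rw [← he, norm_mul, norm_mul, norm_pow, hz]; ring
  have h2 : ‖1 - t * p‖ ^ 2 - ‖p - t‖ ^ 2 = (1 - t ^ 2) * (1 - ‖p‖ ^ 2) := by
    simp only [Complex.sq_norm, Complex.normSq_apply]
    simp
    ring
  have h3 := geom_sum_mul_neg (‖p‖ ^ 2) k
  have h4 : 0 < 1 - ‖p‖ ^ 2 := by nlinarith [norm_nonneg p]
  apply mul_right_cancel₀ h4.ne'
  rw [mul_assoc, h3]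
  linarith

lemma CS {k : ℕ} (hk : 2 ≤ k) {r : ℝ} (hr0 : 0 ≤ r) (hr : r < 1) :
    (∑ i ∈ Finset.range k, r ^ i) ^ 2 < k * ∑ i ∈ Finset.range k, (r ^ 2) ^ i := by
  induction k, hk using Nat.le_induction with
  | base =>
    simp [Finset.sum_range_succ]
    nlinarith [mul_pos (sub_pos.2 hr) (sub_pos.2 hr)]
  | succ k hk ih =>
    rw [Finset.sum_range_succ, Finset.sum_range_succ]
    have : 0 ≤ ∑ i ∈ Finset.range k, (r ^ i - r ^ k) ^ 2 := Finset.sum_nonneg (fun i _ => sq_nonneg _)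
    have e : ∑ i ∈ Finset.range k, (r ^ i - r ^ k) ^ 2 =
        ∑ i ∈ Finset.range k, (r ^ 2) ^ i - 2 * r ^ k * ∑ i ∈ Finset.range k, r ^ i + k * (r ^ k) ^ 2 := by
      rw [Finset.mul_sum, ← Finset.sum_sub_distrib]
      have : (k : ℝ) * (r ^ k) ^ 2 = ∑ i ∈ Finset.range k, (r ^ k) ^ 2 := by simp
      rw [this, ← Finset.sum_add_distrib]
      refine Finset.sum_congr rfl (fun i _ => ?_)
      rw [← pow_mul, mul_comm 2 i, pow_mul]; ring
    have e3 : (r ^ 2) ^ k = (r ^ k) ^ 2 := by rw [← pow_mul, mul_comm 2 k, pow_mul]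
    push_cast
    rw [e3]
    nlinarith

lemma pow_diff_bound {k : ℕ} (S p : ℂ) (hS : ‖S‖ = 1) :
    ‖S ^ k - p ^ k‖ ≤ ‖S - p‖ * ∑ i ∈ Finset.range k, ‖p‖ ^ i := by
  rw [← norm_neg, neg_sub, ← (Commute.all p S).mul_geom_sum₂, norm_mul, norm_sub_rev]
  gcongr
  refine (norm_sum_le _ _).trans (le_of_eq ?_)
  refine Finset.sum_congr rfl (fun i _ => ?_)
  rw [norm_mul, norm_pow, norm_pow, hS]; simp

lemma interior_case {t : ℝ} (ht0 : 0 ≤ t) (ht1 : t < 1) {k : ℕ} (hk : 2 ≤ k)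
    (φ1 φ2 : ℝ) (h12 : φ1 < φ2) (p : ℂ) (hp : ‖p‖ < 1)
    (he : Complex.exp ((φ1 : ℂ) * Complex.I) * p ^ k * (1 - t * p) = p - t) :
    ∃ N : ℕ, 2 * Real.pi ≤ (Blift φ2 t k)^[N] φ2 - (Blift φ1 t k)^[N] φ1 := by
  set z := Complex.exp ((φ1 : ℂ) * Complex.I) with hz
  have hzn : ‖z‖ = 1 := Complex.norm_exp_ofReal_mul_I φ1
  have hK := K1 hzn hp he
  have hCS := CS hk (norm_nonneg p) hp
  set Q := ∑ i ∈ Finset.range k, (‖p‖ ^ 2) ^ i with hQ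
  set A := ∑ i ∈ Finset.range k, ‖p‖ ^ i with hA
  have hA0 : 0 < A := by
    rw [hA]
    refine Finset.sum_pos' (fun i _ => by positivity) ⟨0, by simp; omega, by simp⟩
  have hkp : (0 : ℝ) < k := by positivity
  have ht2 : 0 < 1 - t ^ 2 := by nlinarith
  set a := z * p ^ k with ha
  have han : ‖a‖ < 1 := by
    rw [ha, norm_mul, hzn, one_mul, norm_pow]
    exact pow_lt_one₀ (norm_nonneg p) hp (by omega)
  have hd : 1 - t * p ≠ 0 := by
    have := one_add_ne ht0 ht1 (w := -p) (by rw [norm_neg]; exact hp.le)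
    intro h; apply this; linear_combination h
  have hne : ∀ x : ℝ, 0 < ‖Complex.exp ((x : ℂ) * Complex.I) - a‖ := by
    intro x
    rw [norm_pos_iff, sub_ne_zero]
    intro h
    have := Complex.norm_exp_ofReal_mul_I x
    rw [h] at this; linarith
  refine dynamics ht0 ht1 hk φ1 φ2 h12
    (fun x => (‖Complex.exp ((x : ℂ) * Complex.I) - a‖ ^ 2)⁻¹) ?_ ?_ (((1 - ‖a‖) ^ 2)⁻¹) ?_
    (k * Q / A ^ 2) ?_ ?_
  · refine Continuous.inv₀ (by fun_prop) (fun x => ?_)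
    exact pow_ne_zero _ (hne x).ne'
  · intro x
    have := hne x
    positivity
  · intro x
    have h1 : 0 < 1 - ‖a‖ := by linarith
    have h2 : 1 - ‖a‖ ≤ ‖Complex.exp ((x : ℂ) * Complex.I) - a‖ := by
      have := norm_sub_norm_le (Complex.exp ((x : ℂ) * Complex.I)) a
      rwa [Complex.norm_exp_ofReal_mul_I] at this
    gcongr
  · rw [one_lt_div (by positivity)]; exact hCS
  · intro x
    rw [Blift_exp φ1 ht0 ht1, ← normSq_one_add]
    have hBn : 0 < ‖Blaschke z t k (Complex.exp ((x : ℂ) * Complex.I)) - a‖ := by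
      rw [hz, ← Blift_exp φ1 ht0 ht1]; exact hne _
    have hwn := Complex.norm_exp_ofReal_mul_I x
    have hwa := hne x
    set w := Complex.exp ((x : ℂ) * Complex.I)
    have hw1 := one_add_ne ht0 ht1 hwn.le
    set S := (w + t) / (1 + w * t) with hS
    have hSn : ‖S‖ = 1 := by
      rw [hS, norm_div, div_eq_one_iff_eq (norm_ne_zero_iff.2 hw1), ← sq_eq_sq₀ (norm_nonneg _) (norm_nonneg _)]
      have : ‖w‖ ^ 2 = 1 := by rw [hwn]; norm_num
      simp only [Complex.sq_norm, Complex.normSq_apply] at this ⊢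
      simp
      linear_combination (1 - t ^ 2) * this
    have hSp : S - p = (w - a) * (1 - t * p) / (1 + w * t) := by
      rw [hS]
      field_simp
      linear_combination (1 : ℂ) * he
    have hB1 : ‖Blaschke z t k w - a‖ ≤ ‖w - a‖ * ‖1 - t * p‖ / ‖1 + w * t‖ * A := by
      have e : Blaschke z t k w - a = z * (S ^ k - p ^ k) := by
        unfold Blaschke; rw [ha, hS]; ring
      rw [e, norm_mul, hzn, one_mul]
      have := pow_diff_bound (k := k) S p hSn
      rwa [hSp, norm_div, norm_mul] at this
    have hw1n : 0 < ‖1 + w * t‖ := norm_pos_iff.2 hw1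
    have hB2 : ‖Blaschke z t k w - a‖ ^ 2 ≤ (‖w - a‖ * ‖1 - t * p‖ / ‖1 + w * t‖ * A) ^ 2 := by
      gcongr
    have h5 : ‖1 + w * t‖ ^ 2 * ‖Blaschke z t k w - a‖ ^ 2 ≤ ‖w - a‖ ^ 2 * ‖1 - t * p‖ ^ 2 * A ^ 2 := by
      calc _ ≤ ‖1 + w * t‖ ^ 2 * (‖w - a‖ * ‖1 - t * p‖ / ‖1 + w * t‖ * A) ^ 2 := by gcongr
        _ = _ := by field_simp
    have hQ0 : 0 < Q := by
      by_contra hq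
      have := mul_nonpos_of_nonneg_of_nonpos (sq_nonneg ‖1 - t * p‖) (not_lt.1 hq)
      linarith
    have e1 : k * Q / A ^ 2 * (‖w - a‖ ^ 2)⁻¹ = k * Q / (A ^ 2 * ‖w - a‖ ^ 2) := by field_simp
    have e2 : (‖Blaschke z t k w - a‖ ^ 2)⁻¹ * (k * (1 - t ^ 2) / ‖1 + w * t‖ ^ 2) =
        k * (1 - t ^ 2) / (‖1 + w * t‖ ^ 2 * ‖Blaschke z t k w - a‖ ^ 2) := by field_simp
    rw [e1, e2, div_le_div_iff₀ (by positivity) (by positivity), hK]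
    have := mul_le_mul_of_nonneg_left h5 (by positivity : 0 ≤ k * Q)
    linarith

lemma arg_exp' {x : ℝ} (h1 : -Real.pi < x) (h2 : x ≤ Real.pi) :
    (Complex.exp ((x : ℂ) * Complex.I)).arg = x := by
  rw [Complex.exp_mul_I]
  exact Complex.arg_cos_add_sin_mul_I ⟨h1, h2⟩

lemma wbullet_eq {k : ℕ} (hk : 2 ≤ k) {t : ℝ} (htc : ((k : ℝ) - 1) / ((k : ℝ) + 1) ≤ t) (ht1 : t < 1)
    (ht : 0 < t) :
    ∃ θ : ℝ, 0 ≤ θ ∧ θ ≤ Real.pi ∧ wbullet k t = Complex.exp ((θ : ℂ) * Complex.I) ∧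
      2 * t * Real.cos θ = k * (1 - t ^ 2) - 1 - t ^ 2 := by
  have hk' : (2 : ℝ) ≤ k := by exact_mod_cast hk
  rw [div_le_iff₀ (by positivity)] at htc
  set c : ℝ := (k * (1 - t ^ 2) - 1 - t ^ 2) / (2 * t) with hc
  have hc2 : 2 * t * c = k * (1 - t ^ 2) - 1 - t ^ 2 := by rw [hc]; field_simp
  have h1 : -1 ≤ c := by
    rw [hc, le_div_iff₀ (by positivity)]
    nlinarith [mul_nonneg (sub_pos.2 ht1).le (by nlinarith : 0 ≤ k * (1 + t) - (1 - t))]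
  have h2 : c ≤ 1 := by
    rw [hc, div_le_iff₀ (by positivity)]
    nlinarith [mul_nonneg (by linarith : 0 ≤ 1 + t) (by nlinarith : 0 ≤ (1 + t) - k * (1 - t))]
  refine ⟨Real.arccos c, Real.arccos_nonneg c, Real.arccos_le_pi c, ?_, ?_⟩
  · have hs : Real.sqrt (-(((k : ℝ) + 1)^2 * t^4 - 2 * ((k : ℝ)^2 + 1) * t^2 +
      ((k : ℝ) - 1)^2)) = 2 * t * Real.sqrt (1 - c ^ 2) := by
      rw [← Real.sqrt_sq (by positivity : 0 ≤ 2 * t), ← Real.sqrt_mul (by positivity)]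
      congr 1
      have : (2 * t) ^ 2 * (1 - c ^ 2) = (2 * t) ^ 2 - (2 * t * c) ^ 2 := by ring
      rw [this, hc2]; ring
    rw [Complex.exp_mul_I, ← Complex.ofReal_cos, ← Complex.ofReal_sin, Real.cos_arccos h1 h2,
      Real.sin_arccos]
    unfold wbullet
    rw [hs]
    have htC : (t : ℂ) ≠ 0 := by exact_mod_cast ht.ne'
    have hcC : 2 * (t : ℂ) * c = k * (1 - t ^ 2) - 1 - t ^ 2 := by exact_mod_cast congrArg (fun x : ℝ => (x : ℂ)) hc2
    rw [div_eq_iff (by simpa using htC)]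
    push_cast
    linear_combination -hcC
  · rw [Real.cos_arccos h1 h2, hc2]

lemma phie_eq {k : ℕ} (hk : 2 ≤ k) {t : ℝ} (ht1 : t < 1) (ht : 0 < t) {θ : ℝ} (h0 : 0 ≤ θ) (hpi : θ ≤ Real.pi)
    (hc : 2 * t * Real.cos θ = k * (1 - t ^ 2) - 1 - t ^ 2) :
    ∃ G : ℝ, 0 ≤ G ∧ G ≤ Real.pi ∧
      Complex.exp ((θ : ℂ) * Complex.I) * ((1 + Complex.exp ((θ : ℂ) * Complex.I) * (t : ℂ)) /
        (Complex.exp ((θ : ℂ) * Complex.I) + (t : ℂ))) ^ k = Complex.exp ((G : ℂ) * Complex.I) := by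
  refine ⟨θ - Blift 0 t k θ, ?_, ?_, ?_⟩
  · have hd : ∀ x, HasDerivAt (fun x => x - Blift 0 t k x)
        (1 - (k * (1 - t ^ 2) / (1 + 2 * t * Real.cos x + t ^ 2))) x := fun x =>
      (hasDerivAt_id x).sub (Blift_hasDeriv 0 ht.le ht1 k x)
    have hm : MonotoneOn (fun x => x - Blift 0 t k x) (Set.Icc 0 θ) := by
      apply monotoneOn_of_deriv_nonneg (convex_Icc 0 θ)
      · exact fun x _ => (hd x).continuousAt.continuousWithinAt
      · exact fun x _ => (hd x).differentiableAt.differentiableWithinAt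
      · intro x hx
        rw [interior_Icc] at hx
        rw [(hd x).deriv, sub_nonneg, div_le_one (den2_pos ht.le ht1 x)]
        have := Real.cos_le_cos_of_nonneg_of_le_pi hx.1.le hpi hx.2.le
        nlinarith
    have := hm (Set.left_mem_Icc.2 h0) (Set.right_mem_Icc.2 h0) h0
    simpa [Blift] using this
  · have := (Blift_strictMono 0 ht.le ht1 hk).monotone h0
    have e : Blift 0 t k 0 = 0 := by simp [Blift]
    linarith
  · have := Blift_exp 0 ht.le ht1 k θ
    push_cast
    rw [sub_mul, Complex.exp_sub, this]
    unfold Blaschke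
    simp only [Complex.ofReal_zero, zero_mul, Complex.exp_zero, one_mul]
    rw [div_eq_mul_inv _ (_ ^ k), ← inv_pow, inv_div]

lemma boundary {k : ℕ} (hk : 2 ≤ k) {t : ℝ} (htc : ((k : ℝ) - 1) / ((k : ℝ) + 1) ≤ t) (ht1 : t < 1)
    (ht : 0 < t) {φ : ℝ} (hφ : 0 < φ) (hφ' : φ ≤ Real.pi) (hph : phie k t < φ) {p : ℂ} (hp : ‖p‖ = 1)
    (he : Complex.exp ((φ : ℂ) * Complex.I) * p ^ k * (1 - t * p) = p - t)
    (hK : 1 - t ^ 2 = ‖1 - t * p‖ ^ 2 * k) : False := by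
  obtain ⟨θ, h0, hpi, hw, hc⟩ := wbullet_eq hk htc ht1 ht
  obtain ⟨G, hG0, hGpi, hG⟩ := phie_eq hk ht1 ht h0 hpi hc
  have hphG : phie k t = G := by
    unfold phie
    rw [hw, hG, arg_exp' (by linarith [Real.pi_pos]) hGpi]
  set z := Complex.exp ((φ : ℂ) * Complex.I) with hz
  have hzn : ‖z‖ = 1 := Complex.norm_exp_ofReal_mul_I φ
  set w := Complex.exp ((θ : ℂ) * Complex.I) with hwdef
  set a := z * p ^ k with ha
  have han : ‖a‖ = 1 := by rw [ha, norm_mul, norm_pow, hzn, hp]; simp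
  have hp0 : p ≠ 0 := by intro h; simp [h] at hp
  have hd : 1 - t * p ≠ 0 := by
    have := one_add_ne ht.le ht1 (w := -p) (by rw [norm_neg]; exact hp.le)
    intro h; apply this; linear_combination h
  have hda := one_add_ne ht.le ht1 han.le
  have hap : p * (1 + a * t) = a + t := by linear_combination -he
  have hat : a + t ≠ 0 := by rw [← hap]; exact mul_ne_zero hp0 hda
  have hza : z = a * ((1 + a * t) / (a + t)) ^ k := by
    rw [← hap, ha]
    have : (1 + z * p ^ k * t) / (p * (1 + z * p ^ k * t)) = p⁻¹ := by
      rw [← ha]; field_simp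
    rw [this, inv_pow]
    field_simp
  have hprod : (1 + a * t) * (1 - t * p) = 1 - t ^ 2 := by linear_combination t * he
  have hn : ‖1 + a * t‖ ^ 2 = k * (1 - t ^ 2) := by
    have h1 : ‖1 + a * t‖ ^ 2 * ‖1 - t * p‖ ^ 2 = (1 - t ^ 2) ^ 2 := by
      rw [← mul_pow, ← norm_mul, hprod]
      have : (1 - (t : ℂ) ^ 2) = ((1 - t ^ 2 : ℝ) : ℂ) := by push_cast; ring
      rw [this, Complex.norm_real, Real.norm_eq_abs, sq_abs]
    have hdn : 0 < ‖1 - t * p‖ ^ 2 := by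
      have := norm_pos_iff.2 hd
      positivity
    apply mul_right_cancel₀ hdn.ne'
    rw [h1]
    have ht2 : 0 < 1 - t ^ 2 := by nlinarith
    linear_combination (1 - t ^ 2) * hK
  have han2 : a.re ^ 2 + a.im ^ 2 = 1 := by
    have : ‖a‖ ^ 2 = 1 := by rw [han]; norm_num
    rw [Complex.sq_norm, Complex.normSq_apply] at this
    linarith
  have hre : a.re = Real.cos θ := by
    rw [Complex.sq_norm, Complex.normSq_apply] at hn
    simp at hn
    have : 2 * t * a.re = 2 * t * Real.cos θ := by
      rw [hc]; linear_combination hn - t ^ 2 * han2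
    exact mul_left_cancel₀ (by positivity) this
  have him : a.im = Real.sin θ ∨ a.im = -Real.sin θ := by
    rw [← sq_eq_sq_iff_eq_or_eq_neg]
    have := Real.sin_sq_add_cos_sq θ
    rw [hre] at han2; linarith
  have hwre : w.re = Real.cos θ := Complex.exp_ofReal_mul_I_re θ
  have hwim : w.im = Real.sin θ := Complex.exp_ofReal_mul_I_im θ
  have hargz : z.arg = φ := arg_exp' (by linarith [Real.pi_pos]) hφ'
  rcases him with h | h
  · have : a = w := Complex.ext (by rw [hre, hwre]) (by rw [h, hwim])
    rw [this, hG] at hza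
    rw [hza, arg_exp' (by linarith [Real.pi_pos]) hGpi] at hargz
    linarith
  · have haw : a = (starRingEnd ℂ) w := Complex.ext (by simp [hre, hwre]) (by simp [h, hwim])
    have h3 : (starRingEnd ℂ) z = Complex.exp ((G : ℂ) * Complex.I) := by
      rw [hza, haw, ← hG]
      simp
    have h4 : Complex.exp (((G + φ : ℝ) : ℂ) * Complex.I) = 1 := by
      push_cast
      rw [add_mul, Complex.exp_add, ← h3, ← hz, mul_comm, Complex.mul_conj, ← Complex.sq_norm, hzn]
      simp
    have h5 := congrArg Complex.re h4
    rw [Complex.exp_ofReal_mul_I_re, Complex.one_re, Real.cos_eq_one_iff] at h5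
    obtain ⟨m, hm⟩ := h5
    have hpp := Real.pi_pos
    have m1 : (0 : ℝ) < m := by
      by_contra hh
      have : (m : ℝ) * (2 * Real.pi) ≤ 0 := mul_nonpos_of_nonpos_of_nonneg (not_lt.1 hh) (by positivity)
      linarith
    have m2 : (1 : ℝ) ≤ m := by exact_mod_cast (by exact_mod_cast m1 : (0 : ℤ) < m)
    have : 2 * Real.pi ≤ m * (2 * Real.pi) := by nlinarith
    linarith

lemma exists_fixed {k : ℕ} (hk : 2 ≤ k) {t : ℝ} (htc : ((k : ℝ) - 1) / ((k : ℝ) + 1) ≤ t) (ht1 : t < 1)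
    (ht : 0 < t) {φ1 : ℝ} (hφ : 0 < φ1) (hφ' : φ1 ≤ Real.pi) (hph : phie k t < φ1) :
    ∃ p : ℂ, ‖p‖ < 1 ∧ Complex.exp ((φ1 : ℂ) * Complex.I) * p ^ k * (1 - t * p) = p - t := by
  set K : Set (ℝ × ℂ) := (Set.Icc φ1 Real.pi ×ˢ Metric.closedBall (0 : ℂ) 1) ∩
    ({x | Complex.exp ((x.1 : ℂ) * Complex.I) * x.2 ^ k * (1 - t * x.2) = x.2 - t} ∩
     {x | 1 - t ^ 2 = ‖1 - t * x.2‖ ^ 2 * ∑ i ∈ Finset.range k, (‖x.2‖ ^ 2) ^ i}) with hKdef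
  have hKc : IsCompact K := by
    refine (isCompact_Icc.prod (isCompact_closedBall _ _)).inter_right (IsClosed.inter ?_ ?_)
    · exact isClosed_eq (by fun_prop) (by fun_prop)
    · exact isClosed_eq (by fun_prop) (by fun_prop)
  have hKi : ∀ x ∈ K, ‖x.2‖ < 1 := by
    rintro ⟨φ, p⟩ ⟨⟨h1, h2⟩, h3, h4⟩
    simp only [Set.mem_ofPred_eq, mem_closedBall_zero_iff] at h1 h2 h3 h4
    rcases h2.lt_or_eq with h | h
    · exact h
    · exfalso
      refine boundary hk htc ht1 ht (hφ.trans_le h1.1) h1.2 (hph.trans_le h1.1) h h3 ?_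
      rw [h4, h]; simp
  have hin : ∀ φ p, φ ∈ Set.Icc φ1 Real.pi → ‖p‖ < 1 →
      Complex.exp ((φ : ℂ) * Complex.I) * p ^ k * (1 - t * p) = p - t → (φ, p) ∈ K := by
    intro φ p h1 h2 h3
    refine ⟨⟨h1, by simpa using h2.le⟩, h3, ?_⟩
    exact K1 (Complex.norm_exp_ofReal_mul_I φ) h2 h3
  have hT : IsCompact (Prod.fst '' K) := hKc.image continuous_fst
  have hTne : (Prod.fst '' K).Nonempty := by
    have hcont : ContinuousOn (fun x : ℝ => x - t + x ^ k * (1 - t * x)) (Set.Icc 0 t) := by fun_prop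
    have := intermediate_value_Icc ht.le hcont
    have h0 : (0 : ℝ) ∈ Set.Icc ((0 : ℝ) - t + 0 ^ k * (1 - t * 0)) (t - t + t ^ k * (1 - t * t)) := by
      constructor
      · rw [zero_pow (by omega)]; linarith
      · have : 0 < 1 - t * t := by nlinarith
        have : 0 ≤ t ^ k * (1 - t * t) := by positivity
        linarith
    obtain ⟨x, hx, hx0⟩ := this h0
    refine ⟨Real.pi, (Real.pi, (x : ℂ)), hin _ _ ⟨hφ', le_rfl⟩ ?_ ?_, rfl⟩
    · rw [Complex.norm_real, Real.norm_of_nonneg hx.1]; linarith [hx.2]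
    · rw [Complex.exp_pi_mul_I]
      have : ((x - t + x ^ k * (1 - t * x) : ℝ) : ℂ) = 0 := by exact_mod_cast hx0
      push_cast at this
      linear_combination -this
  obtain ⟨m, hm, hmin⟩ := hT.exists_isLeast hTne
  obtain ⟨⟨m', p⟩, hxK, rfl⟩ := hm
  have hp1 := hKi _ hxK
  obtain ⟨⟨hmI, -⟩, he, -⟩ := hxK
  simp only [Set.mem_ofPred_eq] at hmI he hp1 hmin
  rcases hmI.1.eq_or_lt with h | h
  · exact ⟨p, hp1, by rw [h]; exact he⟩
  exfalso
  have htC : (t : ℂ) ≠ 0 := by exact_mod_cast ht.ne'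
  have hp0 : p ≠ 0 := by
    rintro rfl
    rw [zero_pow (by omega)] at he
    apply htC; linear_combination he
  have hd : ∀ q : ℂ, ‖q‖ < 1 → 1 - t * q ≠ 0 := by
    intro q hq
    have := one_add_ne ht.le ht1 (w := -q) (by rw [norm_neg]; exact hq.le)
    intro h; apply this; linear_combination h
  set Z : ℂ → ℂ := fun q => (q - t) / (q ^ k * (1 - t * q)) with hZ
  have hZp : Z p = Complex.exp ((m' : ℂ) * Complex.I) := by
    rw [hZ]
    simp only
    rw [div_eq_iff (mul_ne_zero (pow_ne_zero _ hp0) (hd p hp1))]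
    linear_combination -he
  have hU : {q : ℂ | ‖q‖ < 1 ∧ q ≠ 0} ∈ nhds p := by
    refine IsOpen.mem_nhds ?_ (show ‖p‖ < 1 ∧ p ≠ 0 from ⟨hp1, hp0⟩)
    exact (isOpen_lt continuous_norm continuous_const).inter isOpen_ne
  have hZa : AnalyticAt ℂ Z p := by
    apply AnalyticAt.div
    · fun_prop
    · fun_prop
    · exact mul_ne_zero (pow_ne_zero _ hp0) (hd p hp1)
  rcases hZa.eventually_constant_or_nhds_le_map_nhds with hcst | hmap
  · set P : Polynomial ℂ := Polynomial.X - Polynomial.C (t : ℂ) -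
      Polynomial.C (Z p) * (Polynomial.X ^ k * (1 - Polynomial.C (t : ℂ) * Polynomial.X)) with hP
    have hP0 : P = 0 := by
      apply Polynomial.eq_zero_of_infinite_isRoot
      apply infinite_of_mem_nhds p
      filter_upwards [hcst, hU] with q hq hqU
      rw [hZ] at hq
      simp only at hq
      rw [div_eq_iff (mul_ne_zero (pow_ne_zero _ hqU.2) (hd q hqU.1))] at hq
      simp [Polynomial.IsRoot, hP]
      rw [hq]; ring
    have := congrArg (Polynomial.eval 0) hP0
    rw [hP] at this
    simp [zero_pow (by omega : k ≠ 0)] at this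
    exact ht.ne' this
  · have h1 : Z '' {q : ℂ | ‖q‖ < 1 ∧ q ≠ 0} ∈ nhds (Complex.exp ((m' : ℂ) * Complex.I)) := by
      rw [← hZp]
      exact hmap (Filter.image_mem_map hU)
    have hcont : Continuous (fun φ : ℝ => Complex.exp ((φ : ℂ) * Complex.I)) := by fun_prop
    have h2 := hcont.continuousAt.preimage_mem_nhds h1
    have h3 : ∀ᶠ φ in nhdsWithin m' (Set.Iio m'), φ ∈ Set.Ioo φ1 m' := Ioo_mem_nhdsLT h
    have h4 := h3.and (Filter.Eventually.filter_mono nhdsWithin_le_nhds h2)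
    obtain ⟨φ, hφ3, q, hq, hqZ⟩ := h4.exists
    rw [hZ] at hqZ
    simp only at hqZ
    rw [div_eq_iff (mul_ne_zero (pow_ne_zero _ hq.2) (hd q hq.1))] at hqZ
    have := hmin ⟨(φ, q), hin φ q ⟨hφ3.1.le, hφ3.2.le.trans hmI.2⟩ hq.1 (by linear_combination -hqZ), rfl⟩
    simp only at this
    linarith [hφ3.2]

theorem stmt9 (k : ℕ) (hk : 2 ≤ k) (t : ℝ) (ht0 : 0 ≤ t) (ht1 : t < 1)
    (φ1 φ2 : ℝ) (hφ1 : 0 < φ1) (hφ12 : φ1 < φ2) (hφ2 : φ2 ≤ Real.pi)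
    (hbc : belowCurve k t (Complex.exp ((φ1 : ℂ) * Complex.I))) :
    (∃ N : ℕ, ∀ n : ℕ, N ≤ n →
      2 * Real.pi * (k : ℝ) ^ (n - N) ≤ (Blift φ2 t k)^[n] φ2 - (Blift φ1 t k)^[n] φ1) ∧
    0 < Filter.liminf
        (fun n : ℕ => ((k : ℝ) ^ n)⁻¹ * ((Blift φ2 t k)^[n] φ2 - (Blift φ1 t k)^[n] φ1))
        Filter.atTop := by
  refine finish ht0 ht1 hk φ1 φ2 hφ12 ?_
  have hk' : (2 : ℝ) ≤ k := by exact_mod_cast hk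
  rcases hbc with ⟨-, h⟩ | ⟨htc, -, h, -⟩
  · rw [lt_div_iff₀ (by positivity)] at h
    refine dynamics ht0 ht1 hk φ1 φ2 hφ12 (fun _ => 1) continuous_const (fun _ => one_pos) 1
      (fun _ => le_rfl) (k * (1 - t) / (1 + t)) ?_ ?_
    · rw [one_lt_div (by linarith)]; nlinarith
    · intro x
      rw [mul_one, one_mul, div_le_div_iff₀ (by linarith) (den2_pos ht0 ht1 x)]
      have h1 : 1 + 2 * t * Real.cos x + t ^ 2 ≤ (1 + t) ^ 2 := by
        nlinarith [Real.cos_le_one x]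
      have := mul_le_mul_of_nonneg_left h1 (mul_nonneg (by linarith : (0 : ℝ) ≤ k) (sub_pos.2 ht1).le)
      nlinarith
  · have ht : 0 < t := lt_of_lt_of_le (div_pos (by linarith) (by linarith)) htc
    rw [arg_exp' (by linarith [Real.pi_pos]) (by linarith), abs_of_pos hφ1] at h
    obtain ⟨p, hp, he⟩ := exists_fixed hk htc ht1 ht hφ1 (by linarith) h
    exact interior_case ht0 ht1 hk φ1 φ2 hφ12 p hp he
end

section
/- Fix an integer k ≥ 2 and set t_c = (k−1)/(k+1). Define h(t) = 2π − 2·arctan(√(((k+1)²·t² − (k−1)²)/((k+1)²·(1 − t²)))) − 2·arccos(((k+1)·t² − k + 1)/(2t)). Then for every t ∈ (t_c, 1): the argument of the square root is nonnegative and the argument of arccos lies in [−1, 1]; the function h is strictly increasing on (t_c, 1); and h(t) < π. -/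
/-- The function `h(t) = B̃_{φ_e(t),t,k+1}(θ_•(t))`, in closed form:
`h(t) = 2π − 2·arctan(√(((k+1)²t² − (k−1)²)/((k+1)²(1 − t²)))) −
2·arccos(((k+1)t² − k + 1)/(2t))`. -/
noncomputable def hVal (k : ℕ) (t : ℝ) : ℝ :=
  2 * Real.pi -
    2 * Real.arctan (Real.sqrt ((((k : ℝ) + 1) ^ 2 * t ^ 2 - ((k : ℝ) - 1) ^ 2) /
      (((k : ℝ) + 1) ^ 2 * (1 - t ^ 2)))) -
    2 * Real.arccos ((((k : ℝ) + 1) * t ^ 2 - (k : ℝ) + 1) / (2 * t))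

lemma aux_basic (n m t : ℝ) (hm : 0 < m) (hnm : n = m + 2) (h1 : m / n < t) (h2 : t < 1) :
    0 < t ∧ 0 < 1 - t ^ 2 ∧ 0 < n ^ 2 * t ^ 2 - m ^ 2 := by
  have hn : 0 < n := by linarith
  have ht : 0 < t := lt_trans (by positivity) h1
  have h3 : m < n * t := by rw [div_lt_iff₀ hn] at h1; linarith
  refine ⟨ht, by nlinarith, by nlinarith⟩

lemma aux_X (n m t : ℝ) (hnm : n = m + 2) (ht : 0 < t) :
    1 - ((n * t ^ 2 - m) / (2 * t)) ^ 2
      = (1 - t ^ 2) * (n ^ 2 * t ^ 2 - m ^ 2) / (2 * t) ^ 2 := by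
  subst hnm
  field_simp
  ring

lemma aux_deriv (n m t : ℝ) (hm : 0 < m) (hnm : n = m + 2) (h1 : m / n < t) (h2 : t < 1) :
    HasDerivAt (fun t : ℝ => 2 * Real.pi -
      2 * Real.arctan (Real.sqrt ((n ^ 2 * t ^ 2 - m ^ 2) / (n ^ 2 * (1 - t ^ 2)))) -
      2 * Real.arccos ((n * t ^ 2 - m) / (2 * t)))
      (2 * m / (t * Real.sqrt ((1 - t ^ 2) * (n ^ 2 * t ^ 2 - m ^ 2)))) t := by
  obtain ⟨ht, hv, hu⟩ := aux_basic n m t hm hnm h1 h2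
  have hn : 0 < n := by linarith
  have hX := aux_X n m t hnm ht
  set q := Real.sqrt ((1 - t ^ 2) * (n ^ 2 * t ^ 2 - m ^ 2)) with hq
  have hq0 : 0 < q := Real.sqrt_pos.2 (by positivity)
  have hq2 : q ^ 2 = (1 - t ^ 2) * (n ^ 2 * t ^ 2 - m ^ 2) := Real.sq_sqrt (by positivity)
  have hW : Real.sqrt (1 - ((n * t ^ 2 - m) / (2 * t)) ^ 2) = q / (2 * t) := by
    rw [hX, ← hq2, ← div_pow, Real.sqrt_sq (by positivity)]
  have hS : Real.sqrt ((n ^ 2 * t ^ 2 - m ^ 2) / (n ^ 2 * (1 - t ^ 2))) = q / (n * (1 - t ^ 2)) := by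
    rw [← Real.sqrt_sq (show 0 ≤ q / (n * (1 - t ^ 2)) by positivity), div_pow, hq2]
    congr 1
    field_simp
  have hX1 : 0 < 1 - ((n * t ^ 2 - m) / (2 * t)) ^ 2 := by rw [hX]; positivity
  have d0 : HasDerivAt (fun t : ℝ => t ^ 2) (2 * t) t := by simpa using hasDerivAt_pow 2 t
  have dR := ((d0.const_mul (n ^ 2)).sub_const (m ^ 2)).fun_div
    ((d0.const_sub 1).const_mul (n ^ 2)) (by positivity)
  have dS := (dR.sqrt (by positivity)).arctan
  have dX := ((d0.const_mul n).sub_const m).fun_div ((hasDerivAt_id t).const_mul 2) (by simp; positivity)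
  have dA := (Real.hasDerivAt_arccos (x := (n * t ^ 2 - m) / (2 * t))
    (by intro h; rw [h] at hX1; norm_num at hX1)
    (by intro h; rw [h] at hX1; norm_num at hX1)).comp t dX
  have d := ((dS.const_mul 2).const_sub (2 * Real.pi)).sub (dA.const_mul 2)
  refine d.congr_deriv ?_
  rw [hW, hS]
  have h5 : 1 + (q / (n * (1 - t ^ 2))) ^ 2 = (n ^ 2 - m ^ 2) / (n ^ 2 * (1 - t ^ 2)) := by
    rw [div_pow, hq2]; field_simp; ring
  have h6 : 0 < n ^ 2 - m ^ 2 := by nlinarith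
  rw [h5]
  simp only [id]
  field_simp
  ring

lemma aux_lt (n m t : ℝ) (hm : 0 < m) (hnm : n = m + 2) (h1 : m / n < t) (h2 : t < 1) :
    2 * Real.pi -
      2 * Real.arctan (Real.sqrt ((n ^ 2 * t ^ 2 - m ^ 2) / (n ^ 2 * (1 - t ^ 2)))) -
      2 * Real.arccos ((n * t ^ 2 - m) / (2 * t)) < Real.pi := by
  obtain ⟨ht, hv, hu⟩ := aux_basic n m t hm hnm h1 h2
  have hn : 0 < n := by linarith
  have hX := aux_X n m t hnm ht
  have h6 : 0 < n ^ 2 - m ^ 2 := by nlinarith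
  have hX1 : 0 < 1 - ((n * t ^ 2 - m) / (2 * t)) ^ 2 := by rw [hX]; positivity
  set X := (n * t ^ 2 - m) / (2 * t) with hXd
  set R := (n ^ 2 * t ^ 2 - m ^ 2) / (n ^ 2 * (1 - t ^ 2)) with hR
  have hR0 : 0 < R := by positivity
  set a := Real.arctan (Real.sqrt R) with ha
  have hs : Real.sin a = Real.sqrt ((n ^ 2 * t ^ 2 - m ^ 2) / (n ^ 2 - m ^ 2)) := by
    rw [ha, Real.sin_arctan, Real.sq_sqrt hR0.le, ← Real.sqrt_div hR0.le]
    congr 1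
    have : 1 + R = (n ^ 2 - m ^ 2) / (n ^ 2 * (1 - t ^ 2)) := by
      rw [hR]; field_simp; ring
    rw [this, hR]; field_simp
  have key : X < Real.sin a := by
    rw [hs]
    rcases le_or_gt X 0 with h | h
    · exact lt_of_le_of_lt h (Real.sqrt_pos.2 (by positivity))
    · apply Real.lt_sqrt_of_sq_lt
      have hp : 0 < n * t ^ 2 - m := by
        rw [hXd] at h
        have := mul_pos h (show 0 < 2 * t by positivity)
        rwa [div_mul_cancel₀ _ (by positivity)] at this
      have e : X ^ 2 = 1 - (1 - t ^ 2) * (n ^ 2 * t ^ 2 - m ^ 2) / (2 * t) ^ 2 := by linarith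
      have e2 : (n ^ 2 * t ^ 2 - m ^ 2) / (n ^ 2 - m ^ 2)
          = 1 - (1 - t ^ 2) * n ^ 2 / (n ^ 2 - m ^ 2) := by field_simp; ring
      rw [e, e2]
      apply sub_lt_sub_left
      rw [div_lt_div_iff₀ h6 (by positivity), mul_assoc, mul_assoc]
      apply mul_lt_mul_of_pos_left _ hv
      have : (n ^ 2 * t ^ 2 - m ^ 2) * (n ^ 2 - m ^ 2) - n ^ 2 * (2 * t) ^ 2
          = 4 * m * (n * (n * t ^ 2 - m) + m) := by subst hnm; ring
      have : 0 < 4 * m * (n * (n * t ^ 2 - m) + m) := by positivity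
      linarith
  have h7 : Real.arccos (Real.sin a) < Real.arccos X :=
    Real.arccos_lt_arccos (by nlinarith) key (Real.sin_le_one a)
  rw [Real.arccos_eq_pi_div_two_sub_arcsin, Real.arcsin_sin (Real.neg_pi_div_two_lt_arctan _).le
    (Real.arctan_lt_pi_div_two _).le] at h7
  linarith

theorem stmt12 (k : ℕ) (hk : 2 ≤ k) :
    (∀ t ∈ Set.Ioo (((k : ℝ) - 1) / ((k : ℝ) + 1)) 1,
      0 ≤ (((k : ℝ) + 1) ^ 2 * t ^ 2 - ((k : ℝ) - 1) ^ 2) / (((k : ℝ) + 1) ^ 2 * (1 - t ^ 2)) ∧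
      -1 ≤ (((k : ℝ) + 1) * t ^ 2 - (k : ℝ) + 1) / (2 * t) ∧
      (((k : ℝ) + 1) * t ^ 2 - (k : ℝ) + 1) / (2 * t) ≤ 1) ∧
    StrictMonoOn (hVal k) (Set.Ioo (((k : ℝ) - 1) / ((k : ℝ) + 1)) 1) ∧
    ∀ t ∈ Set.Ioo (((k : ℝ) - 1) / ((k : ℝ) + 1)) 1, hVal k t < Real.pi := by
  have hk' : (2 : ℝ) ≤ k := by exact_mod_cast hk
  have hm : (0 : ℝ) < (k : ℝ) - 1 := by linarith
  have hnm : (k : ℝ) + 1 = ((k : ℝ) - 1) + 2 := by ring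
  have heq : ∀ t : ℝ, ((k : ℝ) + 1) * t ^ 2 - (k : ℝ) + 1
      = ((k : ℝ) + 1) * t ^ 2 - ((k : ℝ) - 1) := fun t => by ring
  have hfun : hVal k = fun t : ℝ => 2 * Real.pi -
      2 * Real.arctan (Real.sqrt ((((k : ℝ) + 1) ^ 2 * t ^ 2 - ((k : ℝ) - 1) ^ 2) /
        (((k : ℝ) + 1) ^ 2 * (1 - t ^ 2)))) -
      2 * Real.arccos ((((k : ℝ) + 1) * t ^ 2 - ((k : ℝ) - 1)) / (2 * t)) := funext fun t => by rw [hVal, heq]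
  refine ⟨?_, ?_, ?_⟩
  · rintro t ⟨h1, h2⟩
    obtain ⟨ht, hv, hu⟩ := aux_basic _ _ t hm hnm h1 h2
    have hX := aux_X _ _ t hnm ht
    rw [heq]
    refine ⟨by positivity, abs_le.1 ?_⟩
    rw [← sq_le_one_iff_abs_le_one]
    have : 0 ≤ (1 - t ^ 2) * (((k : ℝ) + 1) ^ 2 * t ^ 2 - ((k : ℝ) - 1) ^ 2) / (2 * t) ^ 2 := by
      positivity
    linarith
  · rw [hfun]
    apply strictMonoOn_of_deriv_pos (convex_Ioo _ _)
    · exact fun t h => (aux_deriv _ _ t hm hnm h.1 h.2).continuousAt.continuousWithinAt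
    · intro t h
      rw [interior_Ioo] at h
      obtain ⟨ht, hv, hu⟩ := aux_basic _ _ t hm hnm h.1 h.2
      rw [(aux_deriv _ _ t hm hnm h.1 h.2).deriv]
      have := Real.sqrt_pos.2 (mul_pos hv hu)
      positivity
  · rintro t ⟨h1, h2⟩
    rw [hfun]
    exact aux_lt _ _ t hm hnm h1 h2
end

section
/- Let F : ℝ → ℝ be (the lift of) a C² expanding circle map of degree d ≥ 2. For every ε ∈ (0,1) there exist δ > 0 and C > 0 with the following property: for every C² expanding circle map G of degree d (given by its lift) with ‖F − G‖_{C²} < δ, there exists a conjugacy H from F to G (a continuous strictly increasing H : ℝ → ℝ with H(x+1) = H(x) + 1 and H∘F = G∘H) which is Hölder continuous with exponent 1 − ε: |H(x) − H(y)| ≤ C·|x − y|^{1−ε} for all x, y with |x − y| ≤ 1. -/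
/-- `F : ℝ → ℝ` is the lift of a `C²` expanding circle map of degree `d`:
it is `C²`, satisfies `F(x+1) = F(x) + d`, has positive derivative, and there are
`c > 0`, `λ > 1` with `(Fⁿ)'(x) ≥ c·λⁿ` for all `x` and all `n ≥ 1`. -/
def ExpandingLift (d : ℕ) (F : ℝ → ℝ) : Prop :=
  ContDiff ℝ 2 F ∧ (∀ x : ℝ, F (x + 1) = F x + d) ∧ (∀ x : ℝ, 0 < deriv F x) ∧
  ∃ c : ℝ, 0 < c ∧ ∃ lam : ℝ, 1 < lam ∧
    ∀ x : ℝ, ∀ n : ℕ, 1 ≤ n → c * lam ^ n ≤ deriv (F^[n]) x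

namespace Stmt13Aux

/-- basic facts about lifts -/
lemma strictMono {d : ℕ} {F : ℝ → ℝ} (hF : ExpandingLift d F) : StrictMono F :=
  strictMono_of_deriv_pos hF.2.2.1

lemma diff {d : ℕ} {F : ℝ → ℝ} (hF : ExpandingLift d F) : Differentiable ℝ F :=
  hF.1.differentiable (by norm_num)

lemma contDeriv {d : ℕ} {F : ℝ → ℝ} (hF : ExpandingLift d F) : Continuous (deriv F) :=
  hF.1.continuous_deriv (by norm_num)

lemma perDeriv {d : ℕ} {F : ℝ → ℝ} (hF : ExpandingLift d F) :
    Function.Periodic (deriv F) 1 := by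
  intro x
  have h : (fun x => F (x + 1)) = fun x => F x + d := funext hF.2.1
  have h2 := congrArg (fun g => deriv g x) h
  simp only [deriv_comp_add_const, deriv_add_const] at h2
  exact h2

lemma bddPer {g : ℝ → ℝ} (hg : Continuous g) (hp : Function.Periodic g 1) :
    ∃ B : ℝ, 0 < B ∧ ∀ x, |g x| ≤ B := by
  obtain ⟨B, hB⟩ := isCompact_Icc.exists_bound_of_continuousOn (s := Set.Icc (0:ℝ) 1)
    hg.continuousOn
  refine ⟨|B| + 1, by positivity, fun x => ?_⟩
  obtain ⟨y, hy, hxy⟩ := hp.exists_mem_Ico₀ (by norm_num) x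
  rw [hxy]
  have := hB y ⟨hy.1, hy.2.le⟩
  rw [Real.norm_eq_abs] at this
  linarith [le_abs_self B]

lemma ucDeriv {d : ℕ} {F : ℝ → ℝ} (hF : ExpandingLift d F) : UniformContinuous (deriv F) := by
  have h1 : ContDiff ℝ 1 (deriv F) := by
    have h2 : ContDiff ℝ (1 + 1) F := by
      have := hF.1
      norm_num
      exact this
    exact (contDiff_succ_iff_deriv.1 h2).2.2
  have hp : Function.Periodic (deriv (deriv F)) 1 := by
    intro x
    have h : (fun x => deriv F (x + 1)) = fun x => deriv F x := funext (perDeriv hF)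
    have h2 := congrArg (fun g => deriv g x) h
    simp only [deriv_comp_add_const] at h2
    exact h2
  obtain ⟨L, hL, hLb⟩ := bddPer (h1.continuous_deriv (by norm_num)) hp
  have : LipschitzWith (Real.toNNReal L) (deriv F) :=
    lipschitzWith_of_nnnorm_deriv_le (h1.differentiable (by norm_num)) fun x => by
      rw [← NNReal.coe_le_coe]
      rw [Real.coe_toNNReal L hL.le, coe_nnnorm, Real.norm_eq_abs]
      exact hLb x
  exact this.uniformContinuous

lemma lowPer {g : ℝ → ℝ} (hg : Continuous g) (hp : Function.Periodic g 1)
    (hpos : ∀ x, 0 < g x) : ∃ m : ℝ, 0 < m ∧ ∀ x, m ≤ g x := by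
  obtain ⟨z, -, hz⟩ := isCompact_Icc.exists_isMinOn (s := Set.Icc (0:ℝ) 1)
    ⟨0, by simp⟩ hg.continuousOn
  refine ⟨g z, hpos z, fun x => ?_⟩
  obtain ⟨y, hy, hxy⟩ := hp.exists_mem_Ico₀ (by norm_num) x
  rw [hxy]
  exact hz ⟨hy.1, hy.2.le⟩

lemma expand {d : ℕ} {F : ℝ → ℝ} (hF : ExpandingLift d F) :
    ∃ c : ℝ, 0 < c ∧ ∃ lam : ℝ, 1 < lam ∧
      ∀ n : ℕ, ∀ x y : ℝ, x ≤ y → c * lam ^ n * (y - x) ≤ F^[n] y - F^[n] x := by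
  obtain ⟨c, hc, lam, hl, h⟩ := hF.2.2.2
  refine ⟨min c 1, by positivity, lam, hl, fun n x y hxy => ?_⟩
  rcases Nat.eq_zero_or_pos n with rfl | hn
  · simp only [pow_zero, mul_one, Function.iterate_zero, id]
    have : min c 1 ≤ 1 := min_le_right _ _
    nlinarith
  · refine mul_sub_le_image_sub_of_le_deriv ((diff hF).iterate n) (fun z => ?_) hxy
    refine le_trans ?_ (h z n hn)
    have : min c 1 ≤ c := min_le_left _ _
    gcongr

lemma iter_per {d : ℕ} {F : ℝ → ℝ} (hF : ExpandingLift d F) (k : ℕ) (x : ℝ) :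
    F (x + k) = F x + d * k := by
  induction k with
  | zero => simp
  | succ k ih =>
    push_cast
    rw [← add_assoc, hF.2.1, ih]; ring

lemma iter_per2 {d : ℕ} {F : ℝ → ℝ} (hF : ExpandingLift d F) (n : ℕ) (x : ℝ) :
    F^[n] (x + 1) = F^[n] x + d ^ n := by
  induction n with
  | zero => simp
  | succ n ih =>
    rw [Function.iterate_succ_apply', ih, Function.iterate_succ_apply']
    have := iter_per hF (d ^ n) (F^[n] x)
    push_cast at this
    rw [this]; ring

/-- semiconjugacy to the linear map -/
lemma exists_lin {d : ℕ} (hd : 2 ≤ d) {F : ℝ → ℝ} (hF : ExpandingLift d F) :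
    ∃ h : ℝ → ℝ, Continuous h ∧ StrictMono h ∧ (∀ x, h (x + 1) = h x + 1) ∧
      (∀ x, h (F x) = d * h x) ∧ ∃ B : ℝ, ∀ x, |h x - x| ≤ B := by
  have hd' : (2:ℝ) ≤ d := by exact_mod_cast hd
  have hd0 : (0:ℝ) < d := by linarith
  obtain ⟨B, hB0, hB⟩ : ∃ B : ℝ, 0 < B ∧ ∀ x, |F x - d * x| ≤ B := by
    refine bddPer (g := fun x => F x - d * x) ((diff hF).continuous.sub (by fun_prop)) ?_
    intro x
    simp only [hF.2.1]; ring
  let u : ℕ → ℝ → ℝ := fun n x => F^[n] x / d ^ n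
  have hu : ∀ x n, dist (u n x) (u (n+1) x) ≤ (B / d) * ((1:ℝ) / d) ^ n := by
    intro x n
    have h1 : u n x - u (n+1) x = - (F (F^[n] x) - d * F^[n] x) / d ^ (n+1) := by
      simp only [u, Function.iterate_succ_apply']
      field_simp
      ring
    rw [Real.dist_eq, h1, abs_div, abs_neg, abs_of_pos (show (0:ℝ) < d ^ (n+1) by positivity)]
    have h2 : B / d * ((1:ℝ) / d) ^ n = B / d ^ (n+1) := by
      rw [one_div, inv_pow, pow_succ]
      field_simp
    rw [h2]
    gcongr
    exact hB _
  have hr : (1:ℝ) / d < 1 := by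
    rw [div_lt_one hd0]; linarith
  have hlim : ∀ x, ∃ l, Filter.Tendsto (fun n => u n x) Filter.atTop (nhds l) := fun x =>
    cauchySeq_tendsto_of_complete (cauchySeq_of_le_geometric _ _ hr (hu x))
  choose h hh using hlim
  have hdist : ∀ n x, dist (u n x) (h x) ≤ B / d * (1 / d) ^ n / (1 - 1 / d) := fun n x =>
    dist_le_of_le_geometric_of_tendsto _ _ hr (hu x) (hh x) n
  have hFm := strictMono hF
  have hmono : Monotone h := by
    intro x y hxy
    refine le_of_tendsto_of_tendsto' (hh x) (hh y) fun n => ?_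
    simp only [u]
    gcongr
    exact hFm.monotone.iterate n hxy
  have hsemi : ∀ x, h (F x) = d * h x := by
    intro x
    have h1 : Filter.Tendsto (fun n => d * u (n+1) x) Filter.atTop (nhds (d * h x)) :=
      ((Filter.tendsto_add_atTop_iff_nat 1).2 (hh x)).const_mul _
    refine tendsto_nhds_unique (hh (F x)) (h1.congr fun n => ?_)
    simp only [u, Function.iterate_succ_apply, pow_succ]
    field_simp
  have hbd : ∀ x, |h x - x| ≤ B / d * (1 / d) ^ 0 / (1 - 1 / d) := by
    intro x
    have := hdist 0 x
    rw [dist_comm, Real.dist_eq] at this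
    simpa [u] using this
  set A := B / d * ((1:ℝ) / d) ^ 0 / (1 - 1 / d) with hA
  refine ⟨h, ?_, ?_, ?_, hsemi, A, hbd⟩
  · have hunif : TendstoUniformly u h Filter.atTop := by
      rw [Metric.tendstoUniformly_iff]
      intro e he
      have h0 : Filter.Tendsto (fun n : ℕ => B / d * ((1:ℝ) / d) ^ n / (1 - 1 / d)) Filter.atTop
          (nhds (B / d * 0 / (1 - 1 / d))) :=
        ((tendsto_pow_atTop_nhds_zero_of_lt_one (by positivity) hr).const_mul _).div_const _
      rw [mul_zero, zero_div] at h0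
      filter_upwards [h0.eventually (gt_mem_nhds he)] with n hn x
      rw [dist_comm]
      exact (hdist n x).trans_lt hn
    refine hunif.continuous (Filter.Eventually.of_forall fun n => ?_).frequently
    exact ((diff hF).continuous.iterate n).div_const _
  · refine hmono.strictMono_of_injective ?_
    have key : ∀ x y, x < y → h x ≠ h y := by
      intro x y hxy heq
      obtain ⟨c, hc, lam, hl, hexp⟩ := expand hF
      have hn : ∀ n, h (F^[n] x) = h (F^[n] y) := by
        intro n
        induction n with
        | zero => simpa using heq
        | succ n ih => rw [Function.iterate_succ_apply', Function.iterate_succ_apply', hsemi, hsemi, ih]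
      have hcp : 0 < c * (y - x) := mul_pos hc (by linarith)
      obtain ⟨n, hn1⟩ := pow_unbounded_of_one_lt ((2 * A + 1) / (c * (y - x))) hl
      rw [div_lt_iff₀ hcp] at hn1
      have h1 := hexp n x y hxy.le
      have h2 := abs_le.1 (hbd (F^[n] x))
      have h3 := abs_le.1 (hbd (F^[n] y))
      have h4 := hn n
      nlinarith
    intro x y hxy
    rcases lt_trichotomy x y with h1 | h1 | h1
    · exact absurd hxy (key _ _ h1)
    · exact h1
    · exact absurd hxy.symm (key _ _ h1)
  · intro x
    refine tendsto_nhds_unique (hh (x+1)) (((hh x).add_const 1).congr fun n => ?_)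
    simp only [u, iter_per2 hF]
    field_simp

lemma exists_conj {d : ℕ} (hd : 2 ≤ d) {F G : ℝ → ℝ} (hF : ExpandingLift d F)
    (hG : ExpandingLift d G) :
    ∃ H : ℝ → ℝ, Continuous H ∧ StrictMono H ∧ (∀ x, H (x + 1) = H x + 1) ∧
      (∀ x, H (F x) = G (H x)) ∧ ∃ B : ℝ, ∀ x, |H x - x| ≤ B := by
  obtain ⟨f, fc, fm, f1, fs, A, hA⟩ := exists_lin hd hF
  obtain ⟨g, gc, gm, g1, gs, B, hB⟩ := exists_lin hd hG
  have gsurj : Function.Surjective g := by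
    refine gc.surjective ?_ ?_
    · refine Filter.tendsto_atTop_mono (f := fun x => x - B) (fun x => ?_)
        (Filter.tendsto_atTop_add_const_right _ (-B) Filter.tendsto_id)
      linarith [(abs_le.1 (hB x)).1]
    · refine Filter.tendsto_atBot_mono (f := fun x => x + B) (fun x => ?_)
        (Filter.tendsto_atBot_add_const_right _ B Filter.tendsto_id)
      linarith [(abs_le.1 (hB x)).2]
  let e := gm.orderIsoOfSurjective g gsurj
  have he : ∀ x, g (e.symm x) = x := fun x => e.apply_symm_apply x
  refine ⟨fun x => e.symm (f x), e.symm.continuous.comp fc, e.symm.strictMono.comp fm, ?_, ?_,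
    A + B, ?_⟩
  · intro x
    apply gm.injective
    rw [g1, he, he, f1]
  · intro x
    apply gm.injective
    rw [gs, he, he, fs]
  · intro x
    have h1 := abs_le.1 (hA x)
    have h2 := abs_le.1 (hB (e.symm (f x)))
    rw [he] at h2
    rw [abs_le]
    constructor <;> linarith

lemma iter_close {F : ℝ → ℝ} {L : ℝ} (hL : 0 < L) (hLip : ∀ x y, |F x - F y| ≤ L * |x - y|)
    (N : ℕ) : ∃ K : ℝ, 0 < K ∧ ∀ (G : ℝ → ℝ) (δ : ℝ), 0 < δ → (∀ x, |F x - G x| ≤ δ) →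
      ∀ x, |F^[N] x - G^[N] x| ≤ K * δ := by
  induction N with
  | zero => exact ⟨1, one_pos, fun G δ hδ _ x => by simpa using hδ.le⟩
  | succ N ih =>
    obtain ⟨K, hK, h⟩ := ih
    refine ⟨L * K + 1, by positivity, fun G δ hδ hG x => ?_⟩
    rw [Function.iterate_succ_apply', Function.iterate_succ_apply']
    have h1 := hLip (F^[N] x) (G^[N] x)
    have h2 := h G δ hδ hG x
    have h3 := hG (G^[N] x)
    have h4 := abs_sub_le (F (F^[N] x)) (F (G^[N] x)) (G (G^[N] x))
    have h5 := mul_le_mul_of_nonneg_left h2 hL.le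
    linarith

/-- any conjugacy at bounded distance from the identity is close to the identity -/
lemma conj_close {F : ℝ → ℝ} {c lam : ℝ} (N : ℕ) (hN : 2 ≤ c * lam ^ N)
    (hexp : ∀ x y : ℝ, x ≤ y → c * lam ^ N * (y - x) ≤ F^[N] y - F^[N] x)
    {G H : ℝ → ℝ} {κ B : ℝ} (hκ : ∀ x, |F^[N] x - G^[N] x| ≤ κ)
    (hs : ∀ x, H (F x) = G (H x)) (hB : ∀ x, |H x - x| ≤ B) :
    ∀ x, |H x - x| ≤ κ := by
  have hsN : ∀ x, H (F^[N] x) = G^[N] (H x) := fun x =>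
    (Function.Semiconj.iterate_right (f := H) (ga := F) (gb := G) hs N) x
  have habs : ∀ x y, 2 * |x - y| ≤ |F^[N] x - F^[N] y| := by
    have key : ∀ x y, x ≤ y → 2 * |x - y| ≤ |F^[N] x - F^[N] y| := by
      intro x y hxy
      have h1 := hexp x y hxy
      rw [abs_sub_comm x y, abs_sub_comm (F^[N] x), abs_of_nonneg (sub_nonneg.2 hxy)]
      refine le_trans ?_ (le_abs_self _)
      nlinarith
    intro x y
    rcases le_total x y with h | h
    · exact key x y h
    · rw [abs_sub_comm x y, abs_sub_comm (F^[N] x)]; exact key y x h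
  have hbdd : BddAbove (Set.range fun x => |H x - x|) := ⟨B, by rintro _ ⟨x, rfl⟩; exact hB x⟩
  set D := ⨆ x, |H x - x| with hD
  have hle : ∀ x, |H x - x| ≤ D := fun x => le_ciSup hbdd x
  have hstep : ∀ x, |H x - x| ≤ (κ + D) / 2 := by
    intro x
    have h1 := habs (H x) x
    have h2 := abs_sub_le (F^[N] (H x)) (G^[N] (H x)) (F^[N] x)
    have h3 := hκ (H x)
    have h4 := hle (F^[N] x)
    rw [hsN] at h4
    linarith
  have : D ≤ (κ + D) / 2 := ciSup_le hstep
  intro x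
  have := hle x
  linarith

end Stmt13Aux

open Stmt13Aux in
theorem stmt13 (d : ℕ) (hd : 2 ≤ d) (F : ℝ → ℝ) (hF : ExpandingLift d F)
    (ε : ℝ) (hε0 : 0 < ε) (hε1 : ε < 1) :
    ∃ δ : ℝ, 0 < δ ∧ ∃ C : ℝ, 0 < C ∧
      ∀ G : ℝ → ℝ, ExpandingLift d G →
        (∀ x : ℝ, |F x - G x| + |deriv F x - deriv G x| +
          |deriv (deriv F) x - deriv (deriv G) x| < δ) →
        ∃ H : ℝ → ℝ, Continuous H ∧ StrictMono H ∧ (∀ x : ℝ, H (x + 1) = H x + 1) ∧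
          (∀ x : ℝ, H (F x) = G (H x)) ∧
          ∀ x y : ℝ, |x - y| ≤ 1 → |H x - H y| ≤ C * |x - y| ^ (1 - ε) := by
  obtain ⟨c, hc, lam, hl, hexp⟩ := expand hF
  have hl0 : 0 < lam := by linarith
  obtain ⟨L, hL, hLb⟩ := bddPer (contDeriv hF) (perDeriv hF)
  obtain ⟨m, hm, hmb⟩ := lowPer (contDeriv hF) (perDeriv hF) hF.2.2.1
  have hLip : ∀ x y, |F x - F y| ≤ L * |x - y| := by
    intro x y
    have := Convex.norm_image_sub_le_of_norm_deriv_le (f := F) (s := Set.univ) (x := y) (y := x)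
      (C := L) (fun z _ => (diff hF) z) (fun z _ => by simpa using hLb z) convex_univ
      (Set.mem_univ _) (Set.mem_univ _)
    simpa [Real.norm_eq_abs] using this
  set q := lam ^ ε with hq
  have hq1 : 1 < q := Real.one_lt_rpow hl hε0
  have hq0 : 0 < q := by linarith
  obtain ⟨s, hs0, hs⟩ : ∃ s : ℝ, 0 < s ∧ q * s ≤ (q - 1) * m :=
    ⟨(q - 1) * m / q, by have : 0 < q - 1 := by linarith
                         positivity, by field_simp; rfl⟩
  have huc : UniformContinuous (deriv F) :=
    ucDeriv hF
  obtain ⟨ρ, hρ, hρF⟩ := Metric.uniformContinuous_iff.1 huc (s / 2) (by positivity)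
  obtain ⟨r, hr, hr2⟩ : ∃ r : ℝ, 0 < r ∧ 2 * r < ρ := ⟨ρ / 4, by positivity, by linarith⟩
  obtain ⟨N, hN⟩ : ∃ N : ℕ, 2 ≤ c * lam ^ N := by
    obtain ⟨N, hN⟩ := pow_unbounded_of_one_lt (2 / c) hl
    rw [div_lt_iff₀ hc] at hN
    exact ⟨N, by linarith⟩
  obtain ⟨K, hK, hKc⟩ := iter_close hL hLip N
  obtain ⟨κ, hκ0, hκ1, hκr⟩ : ∃ κ : ℝ, 0 < κ ∧ κ ≤ 1 ∧ κ ≤ r :=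
    ⟨min 1 r, by positivity, min_le_left _ _, min_le_right _ _⟩
  set δ := min (s / 2) (κ / K) with hδ
  have hδ0 : 0 < δ := by positivity
  have hδs : δ ≤ s / 2 := min_le_left _ _
  have hδK : K * δ ≤ κ := by
    have : δ ≤ κ / K := min_le_right _ _
    rw [le_div_iff₀ hK] at this
    linarith
  set M := 1 + L * r with hM
  have hM0 : 0 < M := by positivity
  refine ⟨δ, hδ0, (M + 2) / r * (M / c) ^ ε, by positivity, fun G hG hFG => ?_⟩
  obtain ⟨H, Hc, Hm, H1, Hs, B, hB⟩ := exists_conj hd hF hG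
  refine ⟨H, Hc, Hm, H1, Hs, ?_⟩
  have hFG0 : ∀ x, |F x - G x| ≤ δ := fun x => by
    have := hFG x
    have h1 := abs_nonneg (deriv F x - deriv G x)
    have h2 := abs_nonneg (deriv (deriv F) x - deriv (deriv G) x)
    linarith
  have hFG1 : ∀ x, |deriv F x - deriv G x| ≤ δ := fun x => by
    have := hFG x
    have h1 := abs_nonneg (F x - G x)
    have h2 := abs_nonneg (deriv (deriv F) x - deriv (deriv G) x)
    linarith
  have hHκ : ∀ x, |H x - x| ≤ κ :=
    conj_close N hN (hexp N) (fun x => (hKc G δ hδ0 hFG0 x).trans hδK) Hs hB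
  have Fm := strictMono hF
  -- one step
  have step : ∀ x y, x < y → y - x ≤ r → ∃ a b : ℝ, 0 < a ∧ a ≤ q * b ∧
      F y - F x = a * (y - x) ∧ H (F y) - H (F x) = b * (H y - H x) := by
    intro x y hxy hyr
    obtain ⟨ξ, hξ, hξe⟩ := exists_deriv_eq_slope F hxy (diff hF).continuous.continuousOn
      (diff hF).differentiableOn
    obtain ⟨ζ, hζ, hζe⟩ := exists_deriv_eq_slope G (Hm hxy) (diff hG).continuous.continuousOn
      (diff hG).differentiableOn
    have hyx : y - x ≠ 0 := by linarith
    have hHyx : H y - H x ≠ 0 := by linarith [Hm hxy]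
    refine ⟨deriv F ξ, deriv G ζ, hF.2.2.1 ξ, ?_, ?_, ?_⟩
    · have h1 := abs_le.1 (hHκ x)
      have h2 := abs_le.1 (hHκ y)
      have h3 : dist ξ ζ < ρ := by
        rw [Real.dist_eq, abs_lt]
        constructor <;> linarith [hξ.1, hξ.2, hζ.1, hζ.2]
      have h4 := hρF h3
      rw [Real.dist_eq, abs_lt] at h4
      have h5 := abs_le.1 (hFG1 ζ)
      have h6 : deriv F ξ - s ≤ deriv G ζ := by linarith
      have h7 := mul_le_mul_of_nonneg_left h6 hq0.le
      have h8 := mul_le_mul_of_nonneg_left (hmb ξ) (show 0 ≤ q - 1 by linarith)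
      linarith
    · rw [hξe]; field_simp
    · rw [hζe, Hs, Hs]; field_simp
  have main : ∀ x y : ℝ, x < y → y - x ≤ 1 →
      H y - H x ≤ (M + 2) / r * (M / c) ^ ε * (y - x) ^ (1 - ε) := by
    intro x y hxy hxy1
    have ha0 : 0 < y - x := by linarith
    have hex : ∃ n, r < F^[n] y - F^[n] x := by
      have hcp : 0 < c * (y - x) := by positivity
      obtain ⟨n, hn1⟩ := pow_unbounded_of_one_lt (r / (c * (y - x))) hl
      rw [div_lt_iff₀ hcp] at hn1
      have := hexp n x y hxy.le
      exact ⟨n, by linarith⟩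
    classical
    obtain ⟨n, hn, hmin⟩ : ∃ n, r < F^[n] y - F^[n] x ∧ ∀ k < n, F^[k] y - F^[k] x ≤ r :=
      ⟨Nat.find hex, Nat.find_spec hex, fun k hk => not_lt.1 (Nat.find_min hex hk)⟩
    have hmonoi : ∀ k, F^[k] x < F^[k] y := fun k => Fm.iterate k hxy
    have hnM : F^[n] y - F^[n] x ≤ M := by
      rcases n with _ | k
      · simp only [Function.iterate_zero, id]
        have : 0 < L * r := by positivity
        linarith
      · have h1 := hLip (F^[k] y) (F^[k] x)
        have h2 := hmin k (Nat.lt_succ_self k)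
        rw [abs_of_pos (sub_pos.2 (hmonoi k))] at h1
        rw [Function.iterate_succ_apply', Function.iterate_succ_apply']
        have h3 := le_abs_self (F (F^[k] y) - F (F^[k] x))
        have h4 := mul_le_mul_of_nonneg_left h2 hL.le
        linarith
    have hind : ∀ k ≤ n, (H y - H x) * (F^[k] y - F^[k] x) ≤
        q ^ k * (H (F^[k] y) - H (F^[k] x)) * (y - x) := by
      intro k
      induction k with
      | zero => intro _; simp
      | succ k ih =>
        intro hk
        have h1 := ih (by omega)
        obtain ⟨a, b, ha, hab, e1, e2⟩ := step _ _ (hmonoi k) (hmin k (by omega))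
        rw [Function.iterate_succ_apply', Function.iterate_succ_apply', e1, e2]
        have hb : 0 < H (F^[k] y) - H (F^[k] x) := sub_pos.2 (Hm (hmonoi k))
        calc (H y - H x) * (a * (F^[k] y - F^[k] x))
            = a * ((H y - H x) * (F^[k] y - F^[k] x)) := by ring
          _ ≤ a * (q ^ k * (H (F^[k] y) - H (F^[k] x)) * (y - x)) := by gcongr
          _ ≤ (q * b) * (q ^ k * (H (F^[k] y) - H (F^[k] x)) * (y - x)) := by gcongr
          _ = _ := by ring
    have h1 := hind n le_rfl
    have hbn : H (F^[n] y) - H (F^[n] x) ≤ M + 2 := by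
      have h1 := abs_le.1 (hHκ (F^[n] x))
      have h2 := abs_le.1 (hHκ (F^[n] y))
      linarith
    have hHp : 0 < H y - H x := sub_pos.2 (Hm hxy)
    have h2 : (H y - H x) * r ≤ q ^ n * (M + 2) * (y - x) :=
      calc (H y - H x) * r ≤ (H y - H x) * (F^[n] y - F^[n] x) := by gcongr
        _ ≤ _ := h1
        _ ≤ _ := by gcongr
    have h3 : q ^ n ≤ (M / c) ^ ε / (y - x) ^ ε := by
      have : q ^ n = (lam ^ n) ^ ε := by
        rw [hq, ← Real.rpow_natCast, ← Real.rpow_mul hl0.le, mul_comm, Real.rpow_mul hl0.le,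
          Real.rpow_natCast]
      rw [this, ← Real.div_rpow (by positivity) ha0.le]
      refine Real.rpow_le_rpow (by positivity) ?_ hε0.le
      rw [le_div_iff₀ ha0, le_div_iff₀ hc]
      have := hexp n x y hxy.le
      linarith
    have h4 : H y - H x ≤ q ^ n * (M + 2) * (y - x) / r := by
      rw [le_div_iff₀ hr]; exact h2
    calc H y - H x ≤ q ^ n * (M + 2) * (y - x) / r := h4
      _ ≤ ((M / c) ^ ε / (y - x) ^ ε) * (M + 2) * (y - x) / r := by gcongr
      _ = _ := by
        rw [Real.rpow_sub ha0, Real.rpow_one]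
        ring
  intro x y hxy
  rcases lt_trichotomy x y with h | h | h
  · rw [abs_sub_comm x y, abs_of_pos (sub_pos.2 h)] at hxy ⊢
    rw [abs_sub_comm, abs_of_pos (sub_pos.2 (Hm h))]
    exact main x y h hxy
  · subst h
    rw [sub_self, abs_zero]
    positivity
  · rw [abs_of_pos (sub_pos.2 h)] at hxy ⊢
    rw [abs_of_pos (sub_pos.2 (Hm h))]
    exact main y x h hxy
end

section
/- Let μ be a finite Borel measure on ℝ, let a < b be real numbers, and let f : [a,b] → ℝ be differentiable at every point of [a,b] with derivative f' Lebesgue-integrable on [a,b]. Then ∫_{[a,b]} f dμ = f(b)·μ([a,b]) − ∫_a^b f'(s)·μ([a,s]) ds. -/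
open MeasureTheory

theorem stmt18 (μ : Measure ℝ) [IsFiniteMeasure μ] (a b : ℝ) (hab : a < b)
    (f : ℝ → ℝ) (hf : ∀ x ∈ Set.Icc a b, DifferentiableAt ℝ f x)
    (hf' : IntegrableOn (deriv f) (Set.Icc a b) volume) :
    ∫ x in Set.Icc a b, f x ∂μ =
      f b * (μ (Set.Icc a b)).toReal -
        ∫ s in a..b, deriv f s * (μ (Set.Icc a s)).toReal := by
  have hcont : ContinuousOn f (Set.Icc a b) :=
    fun x hx => (hf x hx).continuousAt.continuousWithinAt
  have hfi : IntegrableOn f (Set.Icc a b) μ := hcont.integrableOn_Icc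
  have hS : MeasurableSet {p : ℝ × ℝ | p.1 ≤ p.2} := measurableSet_le measurable_fst measurable_snd
  have hF : Integrable (Set.indicator {p : ℝ × ℝ | p.1 ≤ p.2} (fun p => deriv f p.2))
      ((μ.restrict (Set.Icc a b)).prod (volume.restrict (Set.Icc a b))) := by
    refine Integrable.indicator ?_ hS
    exact Integrable.comp_snd hf' _
  have hswap := integral_integral_swap
    (f := fun x s => Set.indicator {p : ℝ × ℝ | p.1 ≤ p.2} (fun p => deriv f p.2) (x, s)) hF
  have hL : ∫ x in Set.Icc a b, (∫ s in Set.Icc a b,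
      Set.indicator {p : ℝ × ℝ | p.1 ≤ p.2} (fun p => deriv f p.2) (x, s)) ∂μ
      = ∫ x in Set.Icc a b, (f b - f x) ∂μ := by
    refine setIntegral_congr_fun measurableSet_Icc fun x hx => ?_
    have h1 : ∀ s, Set.indicator {p : ℝ × ℝ | p.1 ≤ p.2} (fun p => deriv f p.2) (x, s)
        = Set.indicator (Set.Ici x) (deriv f) s := fun s => by
      simp [Set.indicator_apply]
    simp only [h1]
    rw [setIntegral_indicator measurableSet_Ici]
    have h2 : Set.Icc a b ∩ Set.Ici x = Set.Icc x b := by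
      ext s; simp only [Set.mem_inter_iff, Set.mem_Icc, Set.mem_Ici]
      have := hx.1
      constructor
      · rintro ⟨⟨_, h⟩, h'⟩; exact ⟨h', h⟩
      · rintro ⟨h, h'⟩; exact ⟨⟨this.trans h, h'⟩, h⟩
    rw [h2, integral_Icc_eq_integral_Ioc, ← intervalIntegral.integral_of_le hx.2]
    refine intervalIntegral.integral_eq_sub_of_hasDerivAt (fun y hy => ?_) ?_
    · rw [Set.uIcc_of_le hx.2] at hy
      exact (hf y ⟨hx.1.trans hy.1, hy.2⟩).hasDerivAt
    · rw [intervalIntegrable_iff_integrableOn_Ioc_of_le hx.2]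
      exact hf'.mono_set fun y hy => ⟨hx.1.trans hy.1.le, hy.2⟩
  have hR : ∫ s in Set.Icc a b, (∫ x in Set.Icc a b,
      Set.indicator {p : ℝ × ℝ | p.1 ≤ p.2} (fun p => deriv f p.2) (x, s) ∂μ)
      = ∫ s in Set.Icc a b, deriv f s * (μ (Set.Icc a s)).toReal := by
    refine setIntegral_congr_fun measurableSet_Icc fun s hs => ?_
    have h1 : ∀ x, Set.indicator {p : ℝ × ℝ | p.1 ≤ p.2} (fun p => deriv f p.2) (x, s)
        = Set.indicator (Set.Iic s) (fun _ => deriv f s) x := fun x => by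
      simp [Set.indicator_apply]
    simp only [h1]
    rw [setIntegral_indicator measurableSet_Iic]
    have h2 : Set.Icc a b ∩ Set.Iic s = Set.Icc a s := by
      ext x; simp only [Set.mem_inter_iff, Set.mem_Icc, Set.mem_Iic]
      constructor
      · rintro ⟨⟨h, _⟩, h'⟩; exact ⟨h, h'⟩
      · rintro ⟨h, h'⟩; exact ⟨⟨h, h'.trans hs.2⟩, h'⟩
    rw [h2, setIntegral_const, smul_eq_mul, mul_comm]; rfl
  rw [hL, hR, integral_sub (integrable_const _) hfi, setIntegral_const, smul_eq_mul,
    integral_Icc_eq_integral_Ioc (μ := volume), ← intervalIntegral.integral_of_le hab.le] at hswap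
  rw [← hswap, Measure.real]
  ring
end
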